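/- Sup-norm entropy of sparse absolutely convex combinations of smooth bivariate components: fix an integer m ≥ 2, a constant b ≥ 1, integers n, p ≥ 1, and let 𝒢_b be the set of m-times continuously differentiable functions g : [0,1]² → ℝ with Ω̃(g) ≤ 1 and ‖g‖_∞ ≤ b. For J ⊆ 𝒥 = {(j,k) : 1 ≤ j ≤ k ≤ p}, let S_J be the set of functions on [0,1]^p of the form Σ_{(j,k)∈J} λ_{j,k} g_{j,k}(x_j, x_k) with Σ_{(j,k)∈J} |λ_{j,k}| ≤ 1 and g_{j,k} ∈ 𝒢_b (for j = k the component g_{j,j} is an m-times continuously differentiable univariate function of x_j with ‖g^{(m)}‖_{L²} ≤ 1 and ‖g‖_∞ ≤ b). Then there is a constant C depending only on m and b such that H(δ, S_J, ‖·‖_∞) ≤ C |J| δ^{−2/m} for all δ ∈ (0,1). -/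

import Mathlib

open scoped ENNReal NNReal

noncomputable section

namespace Census

/-- Mixed partial derivative `∂^{a+b} g / ∂u^a ∂v^b`. -/
def pd (a b : ℕ) (g : ℝ → ℝ → ℝ) (u v : ℝ) : ℝ :=
  iteratedDeriv a (fun t => iteratedDeriv b (g t) v) u

/-- `m`-th order smoothness penalty of a univariate function on `[0,1]`. -/
def Omega1M (m : ℕ) (h : ℝ → ℝ) : ℝ := ∫ u in (0:ℝ)..1, (iteratedDeriv m h u) ^ 2

/-- `m`-th order smoothness penalty of a bivariate function on `[0,1]²`:
`Ω(g) = Σ_{a+b=m} ‖∂^m g/∂u^a ∂v^b‖²_{L²([0,1]²)}`. -/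
def Omega2M (m : ℕ) (g : ℝ → ℝ → ℝ) : ℝ :=
  ∑ a ∈ Finset.range (m + 1),
    ∫ q in (Set.Icc (0:ℝ) 1) ×ˢ (Set.Icc (0:ℝ) 1), (pd a (m - a) g q.1 q.2) ^ 2

/-- The `u`-entropy of a set `A` with respect to an extended distance `d`. -/
def entE {α : Type*} (d : α → α → ℝ≥0∞) (A : Set α) (u : ℝ) : ℝ≥0∞ :=
  ⨅ T : {T : Finset α // ∀ a ∈ A, ∃ t ∈ T, d a t ≤ ENNReal.ofReal u},
    ENNReal.ofReal (Real.log (T.1.card : ℝ))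

/-- Sup-norm (extended) distance over the box `[0,1]^p`. -/
def dBox (p : ℕ) (f g : (Fin p → ℝ) → ℝ) : ℝ≥0∞ :=
  ⨆ x ∈ {x : Fin p → ℝ | ∀ j, x j ∈ Set.Icc (0:ℝ) 1}, ENNReal.ofReal |f x - g x|

/-- The class `S_J` of sparse absolutely convex combinations of `m`-smooth components
with `Ω̃ ≤ 1` and sup-norm bound `b`, supported on the index set `J`. -/
def SJ (m : ℕ) (b : ℝ) (p : ℕ) (J : Finset (Fin p × Fin p)) :
    Set ((Fin p → ℝ) → ℝ) :=
  {f | ∃ (lam : Fin p × Fin p → ℝ) (gd : Fin p → ℝ → ℝ)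
        (go : Fin p → Fin p → ℝ → ℝ → ℝ),
      (∑ q ∈ J, |lam q|) ≤ 1 ∧
      (∀ j, ContDiff ℝ (m : ℕ∞) (gd j) ∧
        Real.sqrt (Omega1M m (gd j)) ≤ 1 ∧
        ∀ u ∈ Set.Icc (0:ℝ) 1, |gd j u| ≤ b) ∧
      (∀ j k, ContDiff ℝ (m : ℕ∞) (fun q : ℝ × ℝ => go j k q.1 q.2) ∧
        Real.sqrt (Omega2M m (go j k)) ≤ 1 ∧
        ∀ u ∈ Set.Icc (0:ℝ) 1, ∀ v ∈ Set.Icc (0:ℝ) 1, |go j k u v| ≤ b) ∧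
      f = fun x => ∑ q ∈ J, lam q *
        (if q.1 = q.2 then gd q.1 (x q.1) else go q.1 q.2 (x q.1) (x q.2))}

end Census

/-!
By the Bramble–Hilbert lemma, tensor Lagrange interpolation of degree less than `m` on the unit
square has an error of at most a multiple of `√Ω`. Rescaling to the cells of the dyadic grids
writes every `g ∈ 𝒢_b` as the telescoping sum of the differences of its consecutive piecewise
interpolants. The penalty `Ω` is additive over the cells, so the coefficients of the difference at
level `j` lie in an `ℓ²` ball of squared radius of order `4 ^ (-(m - 1) * j)`, in a space of
dimension of order `4 ^ j`.

For the accuracy `2 ^ (-m * M)` the coefficients of level `j` are rounded to a lattice of mesh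
`2 ^ (-m * M) * (3 / 4) ^ |j - M|`. The errors then sum to a multiple of `2 ^ (-m * M)`.
The lattice points that occur have bounded `ℓ¹` norm, and an exponential Chernoff-type bound on
their number shows that level `j` costs at most a multiple of `4 ^ M * (8 / 9) ^ |j - M|` in
log-cardinality. In total this is of order `4 ^ M`, hence the exponent `-2 / m`.

For the combinations, the weights `λ` are rounded in `ℓ¹` to a mesh of order `δ / |J|`. This costs
a multiple of `|J| * log (1 / δ)`, while a `δ / 2`-net for each of the `|J|` components costs
`|J| * δ ^ (-2 / m)`.
-/

namespace Census

open Function MeasureTheory unitInterval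
open Finset.HasAntidiagonal (antidiagonal mem_antidiagonal)

/-! ### Mixed partial derivatives -/

section MixedPartials

variable {f g : ℝ → ℝ → ℝ} {a b k : ℕ}

lemma pd_zero_zero (f : ℝ → ℝ → ℝ) : pd 0 0 f = f := by
  funext u v
  simp only [pd, iteratedDeriv_zero]

lemma pd_succ_left (a b : ℕ) (f : ℝ → ℝ → ℝ) : pd (a + 1) b f = pd 1 0 (pd a b f) := by
  funext u v
  simp only [pd, iteratedDeriv_succ, iteratedDeriv_zero]

lemma pd_zero_succ (b : ℕ) (f : ℝ → ℝ → ℝ) : pd 0 (b + 1) f = pd 0 1 (pd 0 b f) := by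
  funext u v
  simp only [pd, iteratedDeriv_one, iteratedDeriv_zero]
  exact congrFun iteratedDeriv_succ v

lemma pd_smul (c : ℝ) (f : ℝ → ℝ → ℝ) : pd a b (c • f) = c • pd a b f := by
  funext u v
  simp only [pd, Pi.smul_apply, iteratedDeriv_const_smul_field]
  exact iteratedDeriv_const_smul_field c _

lemma hasDerivAt_fst (hf : ContDiff ℝ 1 (uncurry f)) (u v : ℝ) :
    HasDerivAt (fun t => f t v) (fderiv ℝ (uncurry f) (u, v) (1, 0)) u :=
  (hf.differentiable one_ne_zero (u, v)).hasFDerivAt.comp_hasDerivAt (f := (·, v)) u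
    ((hasDerivAt_id' u).prodMk (hasDerivAt_const u v))

lemma hasDerivAt_snd (hf : ContDiff ℝ 1 (uncurry f)) (u v : ℝ) :
    HasDerivAt (f u) (fderiv ℝ (uncurry f) (u, v) (0, 1)) v :=
  (hf.differentiable one_ne_zero (u, v)).hasFDerivAt.comp_hasDerivAt v
    ((hasDerivAt_const v u).prodMk (hasDerivAt_id' v))

lemma pd_one_zero_eq_fderiv (hf : ContDiff ℝ 1 (uncurry f)) :
    pd 1 0 f = fun u v => fderiv ℝ (uncurry f) (u, v) (1, 0) := by
  funext u v
  simpa only [pd, iteratedDeriv_one, iteratedDeriv_zero] using (hasDerivAt_fst hf u v).deriv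

lemma pd_zero_one_eq_fderiv (hf : ContDiff ℝ 1 (uncurry f)) :
    pd 0 1 f = fun u v => fderiv ℝ (uncurry f) (u, v) (0, 1) := by
  funext u v
  simpa only [pd, iteratedDeriv_one, iteratedDeriv_zero] using (hasDerivAt_snd hf u v).deriv

lemma hasDerivAt_pd_one_zero (hf : ContDiff ℝ 1 (uncurry f)) (u v : ℝ) :
    HasDerivAt (fun t => f t v) (pd 1 0 f u v) u := by
  simpa only [pd_one_zero_eq_fderiv hf] using hasDerivAt_fst hf u v

lemma hasDerivAt_pd_zero_one (hf : ContDiff ℝ 1 (uncurry f)) (u v : ℝ) :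
    HasDerivAt (f u) (pd 0 1 f u v) v := by
  simpa only [pd_zero_one_eq_fderiv hf] using hasDerivAt_snd hf u v

lemma contDiff_pd_one_zero (hf : ContDiff ℝ (k + 1) (uncurry f)) :
    ContDiff ℝ k (uncurry (pd 1 0 f)) := by
  rw [pd_one_zero_eq_fderiv (hf.of_le le_add_self)]
  exact (hf.fderiv_right le_rfl).clm_apply contDiff_const

lemma contDiff_pd_zero_one (hf : ContDiff ℝ (k + 1) (uncurry f)) :
    ContDiff ℝ k (uncurry (pd 0 1 f)) := by
  rw [pd_zero_one_eq_fderiv (hf.of_le le_add_self)]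
  exact (hf.fderiv_right le_rfl).clm_apply contDiff_const

lemma contDiff_pd (a b : ℕ) (hf : ContDiff ℝ (a + b + k : ℕ) (uncurry f)) :
    ContDiff ℝ k (uncurry (pd a b f)) := by
  induction a generalizing k with
  | zero =>
    induction b generalizing k with
    | zero => simpa only [pd_zero_zero, zero_add] using hf
    | succ b ih =>
      rw [pd_zero_succ]
      exact contDiff_pd_zero_one (ih (k := k + 1) (by convert hf using 2; ring))
  | succ a ih =>
    rw [pd_succ_left]
    exact contDiff_pd_one_zero (ih (k := k + 1) (by convert hf using 2; ring))

lemma contDiff_pd_of_le (hf : ContDiff ℝ k (uncurry f)) (hab : a + b ≤ k) :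
    ContDiff ℝ (k - (a + b) : ℕ) (uncurry (pd a b f)) :=
  contDiff_pd a b (by rwa [Nat.add_sub_cancel' hab])

lemma continuous_pd (hf : ContDiff ℝ k (uncurry f)) (hab : a + b ≤ k) :
    Continuous (uncurry (pd a b f)) :=
  (contDiff_pd_of_le hf hab).continuous

lemma pd_one_zero_pd_zero_one (hf : ContDiff ℝ 2 (uncurry f)) :
    pd 1 0 (pd 0 1 f) = pd 0 1 (pd 1 0 f) := by
  have hf' : ContDiff ℝ (1 + 1) (uncurry f) := by simpa only [one_add_one_eq_two] using hf
  have hf1 : ContDiff ℝ 1 (uncurry f) := hf.of_le one_le_two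
  have hdiff := (hf'.fderiv_right le_rfl).differentiable one_ne_zero
  have fderiv_fderiv_apply (x w z : ℝ × ℝ) :
      fderiv ℝ (fun y => fderiv ℝ (uncurry f) y w) x z =
        fderiv ℝ (fderiv ℝ (uncurry f)) x z w := by
    rw [fderiv_clm_apply (hdiff x) (differentiableAt_const w)]
    simp
  rw [pd_one_zero_eq_fderiv (contDiff_pd_zero_one (k := 1) hf'),
    pd_zero_one_eq_fderiv (contDiff_pd_one_zero (k := 1) hf'),
    pd_one_zero_eq_fderiv hf1, pd_zero_one_eq_fderiv hf1]
  funext u v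
  exact (fderiv_fderiv_apply (u, v) (0, 1) (1, 0)).trans
    ((hf.contDiffAt.isSymmSndFDerivAt (by simp) _ _).trans
      (fderiv_fderiv_apply (u, v) (1, 0) (0, 1)).symm)

lemma pd_zero_one_pd (a b : ℕ) (hf : ContDiff ℝ (a + b + 1 : ℕ) (uncurry f)) :
    pd 0 1 (pd a b f) = pd a (b + 1) f := by
  induction a with
  | zero => exact (pd_zero_succ b f).symm
  | succ a ih =>
    have hab : ContDiff ℝ (2 : ℕ) (uncurry (pd a b f)) :=
      contDiff_pd a b (by convert hf using 2; ring)
    rw [pd_succ_left a b, pd_succ_left a (b + 1), ← ih (hf.of_le (by gcongr; omega)),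
      pd_one_zero_pd_zero_one hab]

lemma pd_one_zero_add (hf : ContDiff ℝ 1 (uncurry f)) (hg : ContDiff ℝ 1 (uncurry g)) :
    pd 1 0 (f + g) = pd 1 0 f + pd 1 0 g := by
  have hfg : ContDiff ℝ 1 (uncurry (f + g)) := hf.add hg
  funext u v
  exact (hasDerivAt_pd_one_zero hfg u v).unique
    ((hasDerivAt_pd_one_zero hf u v).add (hasDerivAt_pd_one_zero hg u v))

lemma pd_zero_one_add (hf : ContDiff ℝ 1 (uncurry f)) (hg : ContDiff ℝ 1 (uncurry g)) :
    pd 0 1 (f + g) = pd 0 1 f + pd 0 1 g := by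
  have hfg : ContDiff ℝ 1 (uncurry (f + g)) := hf.add hg
  funext u v
  exact (hasDerivAt_pd_zero_one hfg u v).unique
    ((hasDerivAt_pd_zero_one hf u v).add (hasDerivAt_pd_zero_one hg u v))

lemma pd_add (hf : ContDiff ℝ (a + b : ℕ) (uncurry f)) (hg : ContDiff ℝ (a + b : ℕ) (uncurry g)) :
    pd a b (f + g) = pd a b f + pd a b g := by
  induction a with
  | zero =>
    induction b with
    | zero => simp only [pd_zero_zero]
    | succ b ih =>
      rw [pd_zero_succ, ih (hf.of_le (by gcongr; omega)) (hg.of_le (by gcongr; omega)),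
        pd_zero_one_add (contDiff_pd (k := 1) 0 b hf) (contDiff_pd (k := 1) 0 b hg),
        ← pd_zero_succ, ← pd_zero_succ]
  | succ a ih =>
    have contDiff_one {h : ℝ → ℝ → ℝ} (hh : ContDiff ℝ (a + 1 + b : ℕ) (uncurry h)) :
        ContDiff ℝ 1 (uncurry (pd a b h)) :=
      contDiff_pd (k := 1) a b (by convert hh using 2; ring)
    rw [pd_succ_left, ih (hf.of_le (by gcongr; omega)) (hg.of_le (by gcongr; omega)),
      pd_one_zero_add (contDiff_one hf) (contDiff_one hg), ← pd_succ_left, ← pd_succ_left]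

lemma pd_sub (hf : ContDiff ℝ (a + b : ℕ) (uncurry f)) (hg : ContDiff ℝ (a + b : ℕ) (uncurry g)) :
    pd a b (f - g) = pd a b f - pd a b g := by
  have hfg : ContDiff ℝ (a + b : ℕ) (uncurry (f - g)) := hf.sub hg
  rw [eq_sub_iff_add_eq, ← pd_add hfg hg, sub_add_cancel]

lemma contDiff_uncurry_sum {ι : Type*} (s : Finset ι) {F : ι → ℝ → ℝ → ℝ}
    (hF : ∀ i ∈ s, ContDiff ℝ k (uncurry (F i))) : ContDiff ℝ k (uncurry (∑ i ∈ s, F i)) := by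
  convert ContDiff.sum hF using 1
  ext x
  simp only [uncurry, Finset.sum_apply]

lemma pd_sum {ι : Type*} (s : Finset ι) {F : ι → ℝ → ℝ → ℝ}
    (hF : ∀ i ∈ s, ContDiff ℝ (a + b : ℕ) (uncurry (F i))) :
    pd a b (∑ i ∈ s, F i) = ∑ i ∈ s, pd a b (F i) := by
  classical
  induction s using Finset.induction_on with
  | empty =>
    simpa only [zero_smul, Finset.sum_empty] using pd_smul (a := a) (b := b) 0 (0 : ℝ → ℝ → ℝ)
  | insert i s hi ih =>
    rw [Finset.forall_mem_insert] at hF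
    rw [Finset.sum_insert hi, Finset.sum_insert hi, pd_add hF.1 (contDiff_uncurry_sum s hF.2),
      ih hF.2]

end MixedPartials

/-! ### Bivariate polynomials -/

section BivariatePolynomials

variable {P : ℝ → ℝ → ℝ} {a b i j m n : ℕ}

/-- The divided monomial `u ^ i * v ^ j / (i! * j!)`, normalised so that `∂^{i+j} / ∂u^i ∂v^j`
maps it to `1`. -/
def bivMonomial (i j : ℕ) (u v : ℝ) : ℝ := u ^ i / i.factorial * (v ^ j / j.factorial)

/-- Bivariate polynomial functions of total degree less than `m`. -/
def polyDegLT (m : ℕ) : Submodule ℝ (ℝ → ℝ → ℝ) :=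
  Submodule.span ℝ {P | ∃ i j : ℕ, i + j < m ∧ P = bivMonomial i j}

/-- Bivariate polynomial functions of degree less than `m` in each of the two variables. -/
def tensorPolyLT (m : ℕ) : Submodule ℝ (ℝ → ℝ → ℝ) :=
  Submodule.span ℝ {P | ∃ p q : Polynomial ℝ, p.degree < m ∧ q.degree < m ∧
    P = fun u v => p.eval u * q.eval v}

lemma pd_mul_separated (p q : ℝ → ℝ) (u v : ℝ) :
    pd a b (fun u v => p u * q v) u v = iteratedDeriv a p u * iteratedDeriv b q v := by
  simp only [pd, iteratedDeriv_const_mul_field, iteratedDeriv_mul_const_field]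

lemma iteratedDeriv_pow_div_factorial_self (u : ℝ) :
    iteratedDeriv i (fun t : ℝ => t ^ i / i.factorial) u = 1 := by
  rw [iteratedDeriv_div_const, iteratedDeriv_pow]
  simp [Nat.descFactorial_self, Nat.factorial_ne_zero]

lemma iteratedDeriv_pow_div_factorial_of_lt (h : i < a) (u : ℝ) :
    iteratedDeriv a (fun t : ℝ => t ^ i / i.factorial) u = 0 := by
  rw [iteratedDeriv_div_const, iteratedDeriv_pow]
  simp [Nat.descFactorial_of_lt h]

lemma pd_bivMonomial_self (i j : ℕ) : pd i j (bivMonomial i j) = 1 := by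
  funext u v
  refine (pd_mul_separated _ _ u v).trans ?_
  simp only [iteratedDeriv_pow_div_factorial_self, mul_one, Pi.one_apply]

lemma pd_bivMonomial_of_lt (h : i < a ∨ j < b) : pd a b (bivMonomial i j) = 0 := by
  funext u v
  refine (pd_mul_separated _ _ u v).trans ?_
  rcases h with h | h <;>
    simp only [iteratedDeriv_pow_div_factorial_of_lt h, zero_mul, mul_zero, Pi.zero_apply]

lemma contDiff_bivMonomial (i j : ℕ) : ContDiff ℝ n (uncurry (bivMonomial i j)) := by
  unfold uncurry bivMonomial
  fun_prop

lemma bivMonomial_mem_polyDegLT (h : i + j < m) : bivMonomial i j ∈ polyDegLT m :=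
  Submodule.subset_span ⟨i, j, h, rfl⟩

lemma polyDegLT_mono (h : m ≤ n) : polyDegLT m ≤ polyDegLT n :=
  Submodule.span_mono fun _ ⟨i, j, hij, hP⟩ => ⟨i, j, hij.trans_le h, hP⟩

lemma contDiff_of_mem_polyDegLT (hP : P ∈ polyDegLT m) : ContDiff ℝ n (uncurry P) := by
  induction hP using Submodule.span_induction with
  | mem P hP => obtain ⟨i, j, -, rfl⟩ := hP; exact contDiff_bivMonomial i j
  | zero => exact contDiff_const
  | add P Q _ _ hP hQ => exact hP.add hQ
  | smul c P _ hP => exact hP.const_smul c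

lemma pd_eq_zero_of_mem_polyDegLT (hab : m ≤ a + b) (hP : P ∈ polyDegLT m) : pd a b P = 0 := by
  induction hP using Submodule.span_induction with
  | mem P hP => obtain ⟨i, j, hij, rfl⟩ := hP; exact pd_bivMonomial_of_lt (by omega)
  | zero => simpa only [zero_smul] using pd_smul (a := a) (b := b) 0 (0 : ℝ → ℝ → ℝ)
  | add P Q hPm hQm hP hQ =>
    rw [pd_add (contDiff_of_mem_polyDegLT hPm) (contDiff_of_mem_polyDegLT hQm), hP, hQ, add_zero]
  | smul c P _ hP => rw [pd_smul, hP, smul_zero]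

lemma polyDegLT_le_tensorPolyLT (m : ℕ) : polyDegLT m ≤ tensorPolyLT m := by
  refine Submodule.span_mono ?_
  rintro _ ⟨i, j, hij, rfl⟩
  have degree_lt {k : ℕ} (hk : k < m) :
      (Polynomial.monomial k (k.factorial : ℝ)⁻¹).degree < m :=
    (Polynomial.degree_monomial_le k _).trans_lt (by exact_mod_cast hk)
  refine ⟨Polynomial.monomial i (i.factorial : ℝ)⁻¹, Polynomial.monomial j (j.factorial : ℝ)⁻¹,
    degree_lt (by omega), degree_lt (by omega), ?_⟩
  funext u v
  simp only [bivMonomial, Polynomial.eval_monomial, div_eq_inv_mul]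

lemma degree_comp_lt {p q : Polynomial ℝ} (hp : p.degree < m) (hq : q.natDegree ≤ 1) :
    (p.comp q).degree < m := by
  by_cases hp0 : p = 0
  · simpa only [hp0, Polynomial.zero_comp] using hp
  · calc (p.comp q).degree ≤ (p.natDegree * q.natDegree : ℕ) :=
          Polynomial.degree_le_of_natDegree_le Polynomial.natDegree_comp_le
      _ ≤ p.natDegree := by exact_mod_cast mul_le_of_le_one_right' hq
      _ < m := by rwa [← Polynomial.degree_eq_natDegree hp0]

lemma tensorPolyLT_comp_affine (hP : P ∈ tensorPolyLT m) (r s t : ℝ) :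
    (fun u v => P (r + t * u) (s + t * v)) ∈ tensorPolyLT m := by
  induction hP using Submodule.span_induction with
  | mem P hP =>
    obtain ⟨p, q, hp, hq, rfl⟩ := hP
    have natDegree_affine_le (r : ℝ) :
        (Polynomial.C r + Polynomial.C t * Polynomial.X).natDegree ≤ 1 := by
      compute_degree
    refine Submodule.subset_span ⟨_, _, degree_comp_lt hp (natDegree_affine_le r),
      degree_comp_lt hq (natDegree_affine_le s), ?_⟩
    funext u v
    simp only [Polynomial.eval_comp, Polynomial.eval_add, Polynomial.eval_mul, Polynomial.eval_C,
      Polynomial.eval_X]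
  | zero => exact Submodule.zero_mem _
  | add P Q _ _ hP hQ => exact Submodule.add_mem _ hP hQ
  | smul c P _ hP => exact Submodule.smul_mem _ c hP

end BivariatePolynomials

/-! ### Poincaré and Sobolev inequalities in `L¹` of the unit square -/

section SobolevL1

variable {f g : ℝ → ℝ → ℝ} {h h' F B : ℝ → ℝ} {c u v x y : ℝ}

/-- The `L¹` norm on the unit square, as an iterated integral. -/
def l1Norm (f : ℝ → ℝ → ℝ) : ℝ := ∫ u in (0 : ℝ)..1, ∫ v in (0 : ℝ)..1, |f u v|

/-- The homogeneous `L¹` Sobolev seminorm of order `k`: the sum of the `L¹` norms of all partial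
derivatives of order exactly `k`. -/
def sobolevL1 (k : ℕ) (f : ℝ → ℝ → ℝ) : ℝ := ∑ a ∈ antidiagonal k, l1Norm (pd a.1 a.2 f)

lemma l1Norm_nonneg (f : ℝ → ℝ → ℝ) : 0 ≤ l1Norm f :=
  intervalIntegral.integral_nonneg zero_le_one fun _ _ =>
    intervalIntegral.integral_nonneg zero_le_one fun _ _ => abs_nonneg _

lemma sobolevL1_nonneg (k : ℕ) (f : ℝ → ℝ → ℝ) : 0 ≤ sobolevL1 k f :=
  Finset.sum_nonneg fun _ _ => l1Norm_nonneg _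

lemma continuous_integral_snd (hf : Continuous (uncurry f)) :
    Continuous fun u => ∫ v in (0 : ℝ)..1, f u v :=
  intervalIntegral.continuous_parametric_intervalIntegral_of_continuous' hf 0 1

lemma continuous_integral_fst (hf : Continuous (uncurry f)) :
    Continuous fun v => ∫ u in (0 : ℝ)..1, f u v :=
  intervalIntegral.continuous_parametric_intervalIntegral_of_continuous'
    (f := fun v u => f u v) (hf.comp continuous_swap) 0 1

lemma integral_unitInterval_mono (hF : Continuous F) (hB : Continuous B)
    (hFB : ∀ y ∈ I, F y ≤ B y) : ∫ y in (0 : ℝ)..1, F y ≤ ∫ y in (0 : ℝ)..1, B y :=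
  intervalIntegral.integral_mono_on zero_le_one (hF.intervalIntegrable 0 1)
    (hB.intervalIntegrable 0 1) hFB

lemma integral_integral_unitInterval_mono (hf : Continuous (uncurry f))
    (hg : Continuous (uncurry g)) (hfg : ∀ u ∈ I, ∀ v ∈ I, f u v ≤ g u v) :
    ∫ u in (0 : ℝ)..1, ∫ v in (0 : ℝ)..1, f u v ≤ ∫ u in (0 : ℝ)..1, ∫ v in (0 : ℝ)..1, g u v :=
  integral_unitInterval_mono (continuous_integral_snd hf) (continuous_integral_snd hg) fun u hu =>
    integral_unitInterval_mono (hf.uncurry_left u) (hg.uncurry_left u) (hfg u hu)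

lemma abs_sub_integral_le (hF : Continuous F) (hB : Continuous B)
    (hFB : ∀ y ∈ I, |c - F y| ≤ B y) : |c - ∫ y in (0 : ℝ)..1, F y| ≤ ∫ y in (0 : ℝ)..1, B y :=
  calc |c - ∫ y in (0 : ℝ)..1, F y| = |∫ y in (0 : ℝ)..1, (c - F y)| := by
        rw [intervalIntegral.integral_sub intervalIntegrable_const (hF.intervalIntegrable 0 1)]
        simp
    _ ≤ ∫ y in (0 : ℝ)..1, |c - F y| :=
        intervalIntegral.abs_integral_le_integral_abs zero_le_one
    _ ≤ ∫ y in (0 : ℝ)..1, B y :=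
        integral_unitInterval_mono (continuous_const.sub hF).abs hB hFB

lemma abs_sub_le_integral_abs_deriv (hd : ∀ x, HasDerivAt h (h' x) x) (hc : Continuous h')
    (hx : x ∈ I) (hy : y ∈ I) : |h x - h y| ≤ ∫ s in (0 : ℝ)..1, |h' s| := by
  wlog hyx : y ≤ x generalizing x y
  · rw [abs_sub_comm]
    exact this hy hx (le_of_not_ge hyx)
  calc |h x - h y| = |∫ s in y..x, h' s| := by
        rw [intervalIntegral.integral_eq_sub_of_hasDerivAt (fun s _ => hd s)
          (hc.intervalIntegrable y x)]
    _ ≤ ∫ s in y..x, |h' s| := intervalIntegral.abs_integral_le_integral_abs hyx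
    _ ≤ ∫ s in (0 : ℝ)..1, |h' s| :=
        intervalIntegral.integral_mono_interval hy.1 hyx hx.2
          (Filter.Eventually.of_forall fun s => abs_nonneg (h' s))
          (hc.abs.intervalIntegrable 0 1)

lemma abs_le_integral_abs_add (hd : ∀ x, HasDerivAt h (h' x) x) (hc : Continuous h')
    (hx : x ∈ I) : |h x| ≤ (∫ s in (0 : ℝ)..1, |h s|) + ∫ s in (0 : ℝ)..1, |h' s| := by
  have hcont : Continuous h := continuous_iff_continuousAt.2 fun x => (hd x).continuousAt
  have oscillation : |(|h x| - ∫ s in (0 : ℝ)..1, |h s|)| ≤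
      ∫ _ in (0 : ℝ)..1, ∫ s in (0 : ℝ)..1, |h' s| :=
    abs_sub_integral_le hcont.abs continuous_const fun y hy =>
      (abs_abs_sub_abs_le_abs_sub (h x) (h y)).trans (abs_sub_le_integral_abs_deriv hd hc hx hy)
  simp only [intervalIntegral.integral_const, sub_zero, one_smul] at oscillation
  linarith [le_of_abs_le oscillation]

lemma integral_abs_le_l1Norm_add (hf : ContDiff ℝ 1 (uncurry f)) (hv : v ∈ I) :
    ∫ u in (0 : ℝ)..1, |f u v| ≤ l1Norm f + l1Norm (pd 0 1 f) := by
  have hcont : Continuous (uncurry fun u v => |f u v|) := hf.continuous.abs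
  have hcont' : Continuous (uncurry fun u v => |pd 0 1 f u v|) :=
    (contDiff_pd_zero_one (k := 0) hf).continuous.abs
  rw [l1Norm, l1Norm, ← intervalIntegral.integral_add
    ((continuous_integral_snd hcont).intervalIntegrable 0 1)
    ((continuous_integral_snd hcont').intervalIntegrable 0 1)]
  exact integral_unitInterval_mono (hcont.uncurry_right v)
    ((continuous_integral_snd hcont).add (continuous_integral_snd hcont')) fun u _ =>
      abs_le_integral_abs_add (hasDerivAt_pd_zero_one hf u)
        ((contDiff_pd_zero_one (k := 0) hf).continuous.uncurry_left u) hv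

lemma abs_le_sum_sobolevL1 (hf : ContDiff ℝ 2 (uncurry f)) (hu : u ∈ I) (hv : v ∈ I) :
    |f u v| ≤ ∑ k ∈ Finset.range 3, sobolevL1 k f := by
  have hf1 : ContDiff ℝ 1 (uncurry f) := hf.of_le one_le_two
  have hpd : ContDiff ℝ 1 (uncurry (pd 1 0 f)) := contDiff_pd (k := 1) 1 0 hf
  have sup_fst : |f u v| ≤ (∫ s in (0 : ℝ)..1, |f s v|) + ∫ s in (0 : ℝ)..1, |pd 1 0 f s v| :=
    abs_le_integral_abs_add (hasDerivAt_pd_one_zero hf1 · v) (hpd.continuous.uncurry_right v) hu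
  have mixed : pd 0 1 (pd 1 0 f) = pd 1 1 f := pd_zero_one_pd 1 0 hf
  have sup_snd := integral_abs_le_l1Norm_add hf1 hv
  have sup_snd' := integral_abs_le_l1Norm_add hpd hv
  rw [mixed] at sup_snd'
  simp only [sobolevL1, Finset.Nat.sum_antidiagonal_eq_sum_range_succ_mk, Finset.sum_range_succ,
    Finset.range_zero, Finset.sum_empty, Nat.sub_zero, Nat.sub_self, Nat.reduceSub, zero_add,
    pd_zero_zero]
  linarith [l1Norm_nonneg (pd 2 0 f), l1Norm_nonneg (pd 0 2 f)]

/-- The mean value over the unit square. -/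
def average (f : ℝ → ℝ → ℝ) : ℝ := ∫ u in (0 : ℝ)..1, ∫ v in (0 : ℝ)..1, f u v

lemma abs_sub_average_le (hf : ContDiff ℝ 1 (uncurry f)) (hu : u ∈ I) (hv : v ∈ I) :
    |f u v - average f| ≤ (∫ s in (0 : ℝ)..1, |pd 1 0 f s v|) + l1Norm (pd 0 1 f) := by
  have hpd₁ : Continuous (uncurry (pd 1 0 f)) := (contDiff_pd_one_zero (k := 0) hf).continuous
  have hpd₂ : Continuous (uncurry (pd 0 1 f)) := (contDiff_pd_zero_one (k := 0) hf).continuous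
  have hmarginal : Continuous fun s => ∫ t in (0 : ℝ)..1, |pd 0 1 f s t| :=
    continuous_integral_snd (f := fun s t => |pd 0 1 f s t|) hpd₂.abs
  have pointwise {s t : ℝ} (hs : s ∈ I) (ht : t ∈ I) : |f u v - f s t| ≤
      (∫ s in (0 : ℝ)..1, |pd 1 0 f s v|) + ∫ t in (0 : ℝ)..1, |pd 0 1 f s t| :=
    (abs_sub_le _ (f s v) _).trans <| add_le_add
      (abs_sub_le_integral_abs_deriv (hasDerivAt_pd_one_zero hf · v) (hpd₁.uncurry_right v) hu hs)
      (abs_sub_le_integral_abs_deriv (hasDerivAt_pd_zero_one hf s) (hpd₂.uncurry_left s) hv ht)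
  have marginal {s : ℝ} (hs : s ∈ I) : |f u v - ∫ t in (0 : ℝ)..1, f s t| ≤
      (∫ s in (0 : ℝ)..1, |pd 1 0 f s v|) + ∫ t in (0 : ℝ)..1, |pd 0 1 f s t| := by
    simpa using abs_sub_integral_le (hf.continuous.uncurry_left s) continuous_const
      fun t ht => pointwise hs ht
  refine (abs_sub_integral_le (continuous_integral_snd hf.continuous)
    (B := fun s => _ + ∫ t in (0 : ℝ)..1, |pd 0 1 f s t|)
    (continuous_const.add hmarginal) fun s hs => marginal hs).trans_eq ?_
  rw [intervalIntegral.integral_add intervalIntegrable_const (hmarginal.intervalIntegrable 0 1),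
    intervalIntegral.integral_const, sub_zero, one_smul, l1Norm]

lemma l1Norm_sub_average_le (hf : ContDiff ℝ 1 (uncurry f)) :
    l1Norm (fun u v => f u v - average f) ≤ l1Norm (pd 1 0 f) + l1Norm (pd 0 1 f) := by
  have hpd : Continuous (uncurry fun u v => |pd 1 0 f u v|) :=
    (contDiff_pd_one_zero (k := 0) hf).continuous.abs
  have hmarginal := continuous_integral_fst hpd
  have swap : l1Norm (pd 1 0 f) = ∫ v in (0 : ℝ)..1, ∫ u in (0 : ℝ)..1, |pd 1 0 f u v| :=
    intervalIntegral_intervalIntegral_swap <|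
      (hpd.continuousOn.integrableOn_compact (isCompact_uIcc.prod isCompact_uIcc)).mono_set
        (Set.prod_mono Set.uIoc_subset_uIcc Set.uIoc_subset_uIcc)
  calc l1Norm (fun u v => f u v - average f)
      ≤ ∫ _ in (0 : ℝ)..1, ∫ v in (0 : ℝ)..1,
          ((∫ s in (0 : ℝ)..1, |pd 1 0 f s v|) + l1Norm (pd 0 1 f)) :=
        integral_integral_unitInterval_mono (f := fun u v => |f u v - average f|)
          (g := fun _ v => _)
          (hf.continuous.sub continuous_const).abs
          ((hmarginal.comp continuous_snd).add continuous_const)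
          fun u hu v hv => abs_sub_average_le hf hu hv
    _ = l1Norm (pd 1 0 f) + l1Norm (pd 0 1 f) := by
        rw [intervalIntegral.integral_add (hmarginal.intervalIntegrable 0 1)
          intervalIntegrable_const, ← swap]
        simp only [intervalIntegral.integral_const, sub_zero, one_smul]

lemma sq_integral_abs_le (hh : Continuous h) :
    (∫ x in (0 : ℝ)..1, |h x|) ^ 2 ≤ ∫ x in (0 : ℝ)..1, h x ^ 2 := by
  set c := ∫ x in (0 : ℝ)..1, |h x| with hc
  have variance_nonneg : 0 ≤ ∫ x in (0 : ℝ)..1, (h x ^ 2 - 2 * c * |h x| + c ^ 2) :=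
    intervalIntegral.integral_nonneg zero_le_one fun x _ => by
      rw [← sq_abs]
      nlinarith [sq_nonneg (|h x| - c)]
  rw [intervalIntegral.integral_add (Continuous.intervalIntegrable (by fun_prop) 0 1)
    intervalIntegrable_const, intervalIntegral.integral_sub
    (Continuous.intervalIntegrable (by fun_prop) 0 1)
    (Continuous.intervalIntegrable (by fun_prop) 0 1),
    intervalIntegral.integral_const_mul, ← hc] at variance_nonneg
  simp only [intervalIntegral.integral_const, sub_zero, one_smul] at variance_nonneg
  linarith

lemma sq_l1Norm_le (hf : Continuous (uncurry f)) :
    l1Norm f ^ 2 ≤ ∫ u in (0 : ℝ)..1, ∫ v in (0 : ℝ)..1, f u v ^ 2 := by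
  have hmarginal : Continuous fun u => ∫ v in (0 : ℝ)..1, |f u v| :=
    continuous_integral_snd (f := fun u v => |f u v|) hf.abs
  have abs_marginal (u : ℝ) : |(∫ v in (0 : ℝ)..1, |f u v|)| = ∫ v in (0 : ℝ)..1, |f u v| :=
    abs_of_nonneg (intervalIntegral.integral_nonneg zero_le_one fun _ _ => abs_nonneg _)
  calc l1Norm f ^ 2 = (∫ u in (0 : ℝ)..1, |(∫ v in (0 : ℝ)..1, |f u v|)|) ^ 2 := by
        simp only [l1Norm, abs_marginal]
    _ ≤ ∫ u in (0 : ℝ)..1, (∫ v in (0 : ℝ)..1, |f u v|) ^ 2 := sq_integral_abs_le hmarginal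
    _ ≤ ∫ u in (0 : ℝ)..1, ∫ v in (0 : ℝ)..1, f u v ^ 2 :=
        integral_unitInterval_mono (hmarginal.pow 2)
          (continuous_integral_snd (f := fun u v => f u v ^ 2) ((continuous_pow 2).comp hf))
          fun u _ => sq_integral_abs_le (hf.uncurry_left u)

end SobolevL1

/-! ### Bramble–Hilbert approximation -/

section BrambleHilbert

variable {G P : ℝ → ℝ → ℝ} {m : ℕ}

/-- The averaged Taylor part of degree `m`: the homogeneous polynomial whose derivatives of order
`m` are the constants `average (pd a b G)`. -/
def averagedTaylorPart (m : ℕ) (G : ℝ → ℝ → ℝ) : ℝ → ℝ → ℝ :=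
  ∑ i ∈ antidiagonal m, average (pd i.1 i.2 G) • bivMonomial i.1 i.2

lemma averagedTaylorPart_mem_polyDegLT (m : ℕ) (G : ℝ → ℝ → ℝ) :
    averagedTaylorPart m G ∈ polyDegLT (m + 1) :=
  Submodule.sum_mem _ fun i hi => Submodule.smul_mem _ _ <| bivMonomial_mem_polyDegLT <| by
    rw [mem_antidiagonal.1 hi]
    exact m.lt_succ_self

lemma pd_averagedTaylorPart (a b : ℕ) (G : ℝ → ℝ → ℝ) :
    pd a b (averagedTaylorPart (a + b) G) = fun _ _ => average (pd a b G) := by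
  have other_terms (i : ℕ × ℕ) (hi : i ∈ antidiagonal (a + b)) (hne : i ≠ (a, b)) :
      average (pd i.1 i.2 G) • pd a b (bivMonomial i.1 i.2) = 0 := by
    have hsum := mem_antidiagonal.1 hi
    rw [ne_eq, Prod.ext_iff, not_and] at hne
    rw [pd_bivMonomial_of_lt (by dsimp only at hne; omega), smul_zero]
  rw [averagedTaylorPart, pd_sum _ fun i _ => contDiff_of_mem_polyDegLT <|
    Submodule.smul_mem _ _ (bivMonomial_mem_polyDegLT (i.1 + i.2).lt_succ_self)]
  simp only [pd_smul]
  rw [Finset.sum_eq_single_of_mem (a, b) (mem_antidiagonal.2 rfl) other_terms,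
    pd_bivMonomial_self]
  funext u v
  simp only [Pi.smul_apply, Pi.one_apply, smul_eq_mul, mul_one]

lemma sum_l1Norm_pd_succ_left_le (m : ℕ) (f : ℝ → ℝ → ℝ) :
    ∑ a ∈ antidiagonal m, l1Norm (pd (a.1 + 1) a.2 f) ≤ sobolevL1 (m + 1) f := by
  rw [sobolevL1, Finset.Nat.sum_antidiagonal_succ]
  exact le_add_of_nonneg_left (l1Norm_nonneg _)

lemma sum_l1Norm_pd_succ_right_le (m : ℕ) (f : ℝ → ℝ → ℝ) :
    ∑ a ∈ antidiagonal m, l1Norm (pd a.1 (a.2 + 1) f) ≤ sobolevL1 (m + 1) f := by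
  rw [sobolevL1, Finset.Nat.sum_antidiagonal_succ']
  exact le_add_of_nonneg_left (l1Norm_nonneg _)

lemma sobolevL1_sub_averagedTaylorPart_le (hG : ContDiff ℝ (m + 1 : ℕ) (uncurry G)) :
    sobolevL1 m (G - averagedTaylorPart m G) ≤ 2 * sobolevL1 (m + 1) G := by
  have poincare {a b : ℕ} (hab : a + b = m) : l1Norm (pd a b (G - averagedTaylorPart m G)) ≤
      l1Norm (pd (a + 1) b G) + l1Norm (pd a (b + 1) G) := by
    subst hab
    rw [pd_sub (hG.of_le (by exact_mod_cast Nat.le_succ _))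
      (contDiff_of_mem_polyDegLT (averagedTaylorPart_mem_polyDegLT _ _)),
      pd_averagedTaylorPart, pd_succ_left, ← pd_zero_one_pd a b hG]
    exact l1Norm_sub_average_le (contDiff_pd (k := 1) a b hG)
  calc sobolevL1 m (G - averagedTaylorPart m G)
      ≤ ∑ a ∈ antidiagonal m, (l1Norm (pd (a.1 + 1) a.2 G) + l1Norm (pd a.1 (a.2 + 1) G)) :=
        Finset.sum_le_sum fun a ha => poincare (mem_antidiagonal.1 ha)
    _ ≤ sobolevL1 (m + 1) G + sobolevL1 (m + 1) G := by
        rw [Finset.sum_add_distrib]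
        exact add_le_add (sum_l1Norm_pd_succ_left_le m G) (sum_l1Norm_pd_succ_right_le m G)
    _ = 2 * sobolevL1 (m + 1) G := (two_mul _).symm

lemma sobolevL1_sub_of_mem_polyDegLT (hG : ContDiff ℝ m (uncurry G)) (hP : P ∈ polyDegLT m) :
    sobolevL1 m (G - P) = sobolevL1 m G := by
  refine Finset.sum_congr rfl fun a ha => ?_
  have hsum : a.1 + a.2 = m := mem_antidiagonal.1 ha
  rw [pd_sub (by rwa [hsum]) (contDiff_of_mem_polyDegLT hP),
    pd_eq_zero_of_mem_polyDegLT hsum.ge hP, sub_zero]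

theorem bramble_hilbert (m : ℕ) : ∃ C : ℝ, 0 ≤ C ∧ ∀ G : ℝ → ℝ → ℝ, ContDiff ℝ m (uncurry G) →
    ∃ P ∈ polyDegLT m, ∀ k ≤ m, sobolevL1 k (G - P) ≤ C * sobolevL1 m G := by
  induction m with
  | zero =>
    refine ⟨1, zero_le_one, fun G _ => ⟨0, Submodule.zero_mem _, fun k hk => ?_⟩⟩
    rw [Nat.le_zero.1 hk, sub_zero, one_mul]
  | succ m ih =>
    obtain ⟨C, hC, approx⟩ := ih
    refine ⟨2 * C + 1, by positivity, fun G hG => ?_⟩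
    set Q := averagedTaylorPart m G
    have hQmem : Q ∈ polyDegLT (m + 1) := averagedTaylorPart_mem_polyDegLT m G
    have hGQ : ContDiff ℝ m (uncurry (G - Q)) :=
      (hG.of_le (by exact_mod_cast Nat.le_succ _)).sub (contDiff_of_mem_polyDegLT hQmem)
    obtain ⟨P, hP, hbound⟩ := approx (G - Q) hGQ
    have hQP : Q + P ∈ polyDegLT (m + 1) :=
      Submodule.add_mem _ hQmem (polyDegLT_mono m.le_succ hP)
    have hnonneg : 0 ≤ sobolevL1 (m + 1) G := sobolevL1_nonneg _ _
    refine ⟨Q + P, hQP, fun k hk => ?_⟩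
    rcases hk.lt_or_eq with hlt | rfl
    · calc sobolevL1 k (G - (Q + P)) = sobolevL1 k (G - Q - P) := by rw [sub_sub]
        _ ≤ C * sobolevL1 m (G - Q) := hbound k (Nat.lt_succ_iff.1 hlt)
        _ ≤ C * (2 * sobolevL1 (m + 1) G) := by
            gcongr
            exact sobolevL1_sub_averagedTaylorPart_le hG
        _ ≤ (2 * C + 1) * sobolevL1 (m + 1) G := by linarith
    · rw [sobolevL1_sub_of_mem_polyDegLT hG hQP]
      exact le_mul_of_one_le_left hnonneg (by linarith)

lemma Omega2M_eq_sum_antidiagonal (hG : ContDiff ℝ m (uncurry G)) :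
    Omega2M m G = ∑ a ∈ antidiagonal m,
      ∫ u in (0 : ℝ)..1, ∫ v in (0 : ℝ)..1, pd a.1 a.2 G u v ^ 2 := by
  rw [Omega2M, Finset.Nat.sum_antidiagonal_eq_sum_range_succ_mk]
  refine Finset.sum_congr rfl fun a ha => ?_
  have hcont : Continuous fun q : ℝ × ℝ => pd a (m - a) G q.1 q.2 ^ 2 :=
    (continuous_pd hG (by rw [Finset.mem_range] at ha; omega)).pow 2
  simp only [intervalIntegral.integral_of_le zero_le_one, ← integral_Icc_eq_integral_Ioc]
  exact setIntegral_prod (fun q : ℝ × ℝ => pd a (m - a) G q.1 q.2 ^ 2)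
    (hcont.continuousOn.integrableOn_compact (isCompact_Icc.prod isCompact_Icc))

lemma Omega2M_nonneg (m : ℕ) (G : ℝ → ℝ → ℝ) : 0 ≤ Omega2M m G :=
  Finset.sum_nonneg fun _ _ => integral_nonneg fun _ => sq_nonneg _

lemma sobolevL1_le_sqrt_Omega2M (hG : ContDiff ℝ m (uncurry G)) :
    sobolevL1 m G ≤ (m + 1) * √(Omega2M m G) := by
  have term_le (a : ℕ × ℕ) (ha : a ∈ antidiagonal m) :
      l1Norm (pd a.1 a.2 G) ≤ √(Omega2M m G) := by
    refine Real.le_sqrt_of_sq_le <| (sq_l1Norm_le <| continuous_pd hG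
      (mem_antidiagonal.1 ha).le).trans ?_
    rw [Omega2M_eq_sum_antidiagonal hG]
    exact Finset.single_le_sum (f := fun a : ℕ × ℕ =>
      ∫ u in (0 : ℝ)..1, ∫ v in (0 : ℝ)..1, pd a.1 a.2 G u v ^ 2)
      (fun a _ => intervalIntegral.integral_nonneg zero_le_one fun _ _ =>
        intervalIntegral.integral_nonneg zero_le_one fun _ _ => sq_nonneg _) ha
  calc sobolevL1 m G ≤ (antidiagonal m).card • √(Omega2M m G) :=
        Finset.sum_le_card_nsmul _ _ _ term_le
    _ = (m + 1) * √(Omega2M m G) := by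
        rw [Finset.Nat.card_antidiagonal, nsmul_eq_mul, Nat.cast_succ]

theorem exists_polyDegLT_abs_sub_le (hm : 2 ≤ m) :
    ∃ C : ℝ, 0 ≤ C ∧ ∀ G : ℝ → ℝ → ℝ, ContDiff ℝ m (uncurry G) →
      ∃ P ∈ polyDegLT m, ∀ u ∈ I, ∀ v ∈ I, |G u v - P u v| ≤ C * √(Omega2M m G) := by
  obtain ⟨C, hC, approx⟩ := bramble_hilbert m
  refine ⟨3 * (C * (m + 1)), by positivity, fun G hG => ?_⟩
  obtain ⟨P, hP, hbound⟩ := approx G hG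
  have hGP : ContDiff ℝ 2 (uncurry (G - P)) :=
    (hG.of_le (by exact_mod_cast hm)).sub (contDiff_of_mem_polyDegLT (n := 2) hP)
  refine ⟨P, hP, fun u hu v hv => ?_⟩
  calc |G u v - P u v| ≤ ∑ k ∈ Finset.range 3, sobolevL1 k (G - P) :=
        abs_le_sum_sobolevL1 hGP hu hv
    _ ≤ ∑ _k ∈ Finset.range 3, C * sobolevL1 m G :=
        Finset.sum_le_sum fun k hk => hbound k (by rw [Finset.mem_range] at hk; omega)
    _ = 3 * (C * sobolevL1 m G) := by
        simp only [Finset.sum_const, Finset.card_range, nsmul_eq_mul, Nat.cast_ofNat]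
    _ ≤ 3 * (C * ((m + 1) * √(Omega2M m G))) := by
        gcongr
        exact sobolevL1_le_sqrt_Omega2M hG
    _ = 3 * (C * (m + 1)) * √(Omega2M m G) := by ring

end BrambleHilbert

/-! ### Tensor Lagrange interpolation -/

section TensorInterpolation

variable {F P : ℝ → ℝ → ℝ} {m : ℕ} {K u v ε : ℝ}

/-- The equispaced interpolation nodes `a / m`, for `a < m`, in the unit interval. -/
def node (m : ℕ) (a : Fin m) : ℝ := a / m

/-- The Lagrange basis polynomials for the nodes `node m`, as functions. -/
def nodeBasis (m : ℕ) (a : Fin m) (u : ℝ) : ℝ :=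
  (Lagrange.basis Finset.univ (node m) a).eval u

/-- The tensor-product Lagrange interpolant of `F` at the grid of nodes `node m` in the unit
square. -/
def tensorInterp (m : ℕ) : (ℝ → ℝ → ℝ) →ₗ[ℝ] (ℝ → ℝ → ℝ) where
  toFun F u v := ∑ a, ∑ b, F (node m a) (node m b) * (nodeBasis m a u * nodeBasis m b v)
  map_add' F G := by
    funext u v
    simp only [Pi.add_apply, add_mul, Finset.sum_add_distrib]
  map_smul' c F := by
    funext u v
    simp only [Pi.smul_apply, smul_eq_mul, mul_assoc, Finset.mul_sum, RingHom.id_apply]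

lemma tensorInterp_apply (m : ℕ) (F : ℝ → ℝ → ℝ) (u v : ℝ) : tensorInterp m F u v =
    ∑ a, ∑ b, F (node m a) (node m b) * (nodeBasis m a u * nodeBasis m b v) :=
  rfl

lemma node_mem_unitInterval (a : Fin m) : node m a ∈ I :=
  div_mem a.val.cast_nonneg m.cast_nonneg (by exact_mod_cast a.isLt.le)

lemma node_injective (m : ℕ) : Injective (node m) := fun a b hab => by
  have hm : (m : ℝ) ≠ 0 := by exact_mod_cast (Fin.pos a).ne'
  exact Fin.ext (by exact_mod_cast (div_left_inj' hm).1 hab)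

lemma sum_eval_mul_nodeBasis {p : Polynomial ℝ} (hp : p.degree < m) (u : ℝ) :
    ∑ a, p.eval (node m a) * nodeBasis m a u = p.eval u := by
  conv_rhs => rw [Lagrange.eq_interpolate (s := Finset.univ) (f := p) (node_injective m).injOn
    (by rwa [Finset.card_univ, Fintype.card_fin])]
  simp only [Lagrange.interpolate_apply, Polynomial.eval_finsetSum, Polynomial.eval_mul,
    Polynomial.eval_C, nodeBasis]

lemma tensorInterp_eq_self (hP : P ∈ tensorPolyLT m) : tensorInterp m P = P := by
  induction hP using Submodule.span_induction with
  | mem P hP =>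
    obtain ⟨p, q, hp, hq, rfl⟩ := hP
    funext u v
    rw [tensorInterp_apply, ← sum_eval_mul_nodeBasis hp u, ← sum_eval_mul_nodeBasis hq v,
      Finset.sum_mul_sum]
    exact Finset.sum_congr rfl fun a _ => Finset.sum_congr rfl fun b _ => mul_mul_mul_comm _ _ _ _
  | zero => exact map_zero _
  | add P Q _ _ hP hQ => rw [map_add, hP, hQ]
  | smul c P _ hP => rw [map_smul, hP]

lemma degree_nodeBasis_lt (a : Fin m) :
    (Lagrange.basis Finset.univ (node m) a).degree < m := by
  rw [Lagrange.degree_basis (node_injective m).injOn (Finset.mem_univ a), Finset.card_univ,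
    Fintype.card_fin]
  exact_mod_cast Nat.sub_lt (Fin.pos a) one_pos

lemma tensorInterp_mem_tensorPolyLT (m : ℕ) (F : ℝ → ℝ → ℝ) :
    tensorInterp m F ∈ tensorPolyLT m := by
  have expansion : tensorInterp m F = ∑ a, ∑ b, F (node m a) (node m b) •
      fun u v => nodeBasis m a u * nodeBasis m b v := by
    funext u v
    simp only [tensorInterp_apply, Finset.sum_apply, Pi.smul_apply, smul_eq_mul]
  rw [expansion]
  exact Submodule.sum_mem _ fun a _ => Submodule.sum_mem _ fun b _ => Submodule.smul_mem _ _ <|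
    Submodule.subset_span ⟨_, _, degree_nodeBasis_lt a, degree_nodeBasis_lt b, rfl⟩

lemma exists_sum_abs_nodeBasis_le (m : ℕ) :
    ∃ K : ℝ, 0 ≤ K ∧ ∀ u ∈ I, ∑ a, |nodeBasis m a u| ≤ K := by
  have hcont : Continuous fun u => ∑ a, |nodeBasis m a u| :=
    continuous_finsetSum _ fun a _ => (Polynomial.continuous _).abs
  obtain ⟨K, hK⟩ := isCompact_Icc.exists_bound_of_continuousOn (s := I) hcont.continuousOn
  have hK' : ∀ u ∈ I, ∑ a, |nodeBasis m a u| ≤ K := fun u hu => (le_abs_self _).trans (hK u hu)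
  exact ⟨K, (Finset.sum_nonneg fun _ _ => abs_nonneg _).trans (hK' 0 zero_mem), hK'⟩

lemma abs_tensorInterp_le (hK : ∀ u ∈ I, ∑ a, |nodeBasis m a u| ≤ K)
    (hF : ∀ u ∈ I, ∀ v ∈ I, |F u v| ≤ ε) (hu : u ∈ I) (hv : v ∈ I) :
    |tensorInterp m F u v| ≤ ε * K ^ 2 := by
  have hε : 0 ≤ ε := (abs_nonneg _).trans (hF u hu v hv)
  have hK0 : 0 ≤ K := (Finset.sum_nonneg fun _ _ => abs_nonneg _).trans (hK u hu)
  calc |tensorInterp m F u v|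
      ≤ ∑ a, ∑ b, |F (node m a) (node m b) * (nodeBasis m a u * nodeBasis m b v)| :=
        tensorInterp_apply m F u v ▸ (Finset.abs_sum_le_sum_abs _ _).trans
          (Finset.sum_le_sum fun _ _ => Finset.abs_sum_le_sum_abs _ _)
    _ ≤ ∑ a, ∑ b, ε * (|nodeBasis m a u| * |nodeBasis m b v|) := by
        gcongr with a _ b _
        rw [abs_mul, abs_mul]
        gcongr
        exact hF _ (node_mem_unitInterval a) _ (node_mem_unitInterval b)
    _ = ε * ((∑ a, |nodeBasis m a u|) * ∑ b, |nodeBasis m b v|) := by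
        rw [Finset.sum_mul_sum]
        simp only [Finset.mul_sum]
    _ ≤ ε * K ^ 2 := by
        rw [sq]
        gcongr
        exacts [hK u hu, hK v hv]

theorem exists_abs_sub_tensorInterp_le (hm : 2 ≤ m) :
    ∃ C : ℝ, 0 ≤ C ∧ ∀ G : ℝ → ℝ → ℝ, ContDiff ℝ m (uncurry G) →
      ∀ u ∈ I, ∀ v ∈ I, |(G - tensorInterp m G) u v| ≤ C * √(Omega2M m G) := by
  obtain ⟨C, hC, approx⟩ := exists_polyDegLT_abs_sub_le hm
  obtain ⟨K, -, hK⟩ := exists_sum_abs_nodeBasis_le m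
  refine ⟨C + C * K ^ 2, by positivity, fun G hG u hu v hv => ?_⟩
  obtain ⟨P, hP, hGP⟩ := approx G hG
  have reproduces : G - tensorInterp m G = (G - P) - tensorInterp m (G - P) := by
    rw [map_sub, tensorInterp_eq_self (polyDegLT_le_tensorPolyLT m hP), sub_sub_sub_cancel_right]
  calc |(G - tensorInterp m G) u v| = |(G - P) u v - tensorInterp m (G - P) u v| := by
        rw [reproduces]; rfl
    _ ≤ |(G - P) u v| + |tensorInterp m (G - P) u v| := abs_sub _ _
    _ ≤ C * √(Omega2M m G) + C * √(Omega2M m G) * K ^ 2 :=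
        add_le_add (hGP u hu v hv) (abs_tensorInterp_le hK hGP hu hv)
    _ = (C + C * K ^ 2) * √(Omega2M m G) := by ring

end TensorInterpolation

/-! ### Grid cells -/

section Cells

variable {f g : ℝ → ℝ → ℝ} {h : ℝ → ℝ} {k l m n N : ℕ} {u : ℝ}

/-- The restriction of `g` to the cell `(k, l)` of the `N × N` grid on the unit square, rescaled
to the unit square. -/
def cell (N k l : ℕ) (g : ℝ → ℝ → ℝ) (u v : ℝ) : ℝ := g ((k + u) / N) ((l + v) / N)

/-- The index of the cell of the `N`-grid on the unit interval which contains `u`; the last cell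
is closed on the right. -/
def cellIndex (N : ℕ) (u : ℝ) : ℕ := min ⌊N * u⌋₊ (N - 1)

/-- The position of `u` in its cell of the `N`-grid, rescaled to the unit interval. -/
def cellCoord (N : ℕ) (u : ℝ) : ℝ := N * u - cellIndex N u

/-- The function whose rescaled restriction to the cell `(k, l)` of the `N × N` grid is `F k l`. -/
def glue (N : ℕ) (F : ℕ → ℕ → ℝ → ℝ → ℝ) (u v : ℝ) : ℝ :=
  F (cellIndex N u) (cellIndex N v) (cellCoord N u) (cellCoord N v)

lemma cellIndex_lt (hN : 0 < N) (u : ℝ) : cellIndex N u < N :=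
  (min_le_right _ _).trans_lt (Nat.sub_lt hN one_pos)

lemma cellIndex_two_mul_div_two (N : ℕ) (u : ℝ) : cellIndex (2 * N) u / 2 = cellIndex N u := by
  have floor_half : ⌊(2 * N : ℕ) * u⌋₊ / 2 = ⌊N * u⌋₊ := by
    rw [← Nat.floor_div_natCast]
    congr 1
    push_cast
    ring
  unfold cellIndex
  omega

lemma cellCoord_mem_unitInterval (hN : 0 < N) (hu : u ∈ I) : cellCoord N u ∈ I := by
  have hN' : (N : ℝ) * u ≤ N := mul_le_of_le_one_right N.cast_nonneg hu.2
  have floor_le := Nat.floor_le (mul_nonneg N.cast_nonneg hu.1)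
  have lt_floor := Nat.lt_floor_add_one (N * u)
  have index_le : (cellIndex N u : ℝ) ≤ ⌊N * u⌋₊ := by exact_mod_cast min_le_left _ _
  have le_index : N * u - 1 ≤ cellIndex N u := by
    rw [cellIndex, Nat.cast_min, Nat.cast_pred hN, le_min_iff]
    constructor <;> linarith
  rw [cellCoord]
  constructor <;> linarith

lemma cellIndex_add_cellCoord_div (hN : 0 < N) (u : ℝ) :
    (cellIndex N u + cellCoord N u) / N = u := by
  rw [cellCoord, add_sub_cancel, mul_div_cancel_left₀ u (by exact_mod_cast hN.ne')]

lemma glue_cell (hN : 0 < N) (g : ℝ → ℝ → ℝ) : glue N (fun k l => cell N k l g) = g := by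
  funext u v
  simp only [glue, cell, cellIndex_add_cellCoord_div hN]

lemma cell_two_mul (N k l : ℕ) (g : ℝ → ℝ → ℝ) :
    cell (2 * N) k l g = cell 2 (k % 2) (l % 2) (cell N (k / 2) (l / 2) g) := by
  have halve (k : ℕ) (u : ℝ) : (k + u) / (2 * N : ℕ) =
      ((k / 2 : ℕ) + ((k % 2 : ℕ) + u) / (2 : ℕ)) / N := by
    have hk : (k : ℝ) = 2 * (k / 2 : ℕ) + (k % 2 : ℕ) := by exact_mod_cast (k.div_add_mod 2).symm
    conv_lhs => rw [hk]
    push_cast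
    rw [← div_div]
    ring
  funext u v
  simp only [cell, halve]

lemma mod_two_add_cellCoord_div_two (N : ℕ) (u : ℝ) :
    ((cellIndex (2 * N) u % 2 : ℕ) + cellCoord (2 * N) u) / (2 : ℕ) = cellCoord N u := by
  have hindex : (cellIndex (2 * N) u : ℝ) =
      2 * (cellIndex N u : ℕ) + (cellIndex (2 * N) u % 2 : ℕ) := by
    rw [← cellIndex_two_mul_div_two N u]
    exact_mod_cast (Nat.div_add_mod _ 2).symm
  rw [cellCoord, cellCoord, hindex]
  push_cast
  ring

lemma glue_cell_two (N : ℕ) (F : ℕ → ℕ → ℝ → ℝ → ℝ) :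
    glue (2 * N) (fun k l => cell 2 (k % 2) (l % 2) (F (k / 2) (l / 2))) = glue N F := by
  funext u v
  simp only [glue, cell, mod_two_add_cellCoord_div_two, cellIndex_two_mul_div_two]

lemma contDiff_cell (hg : ContDiff ℝ n (uncurry g)) : ContDiff ℝ n (uncurry (cell N k l g)) :=
  hg.comp (f := fun q : ℝ × ℝ => ((k + q.1) / (N : ℝ), (l + q.2) / (N : ℝ))) (by fun_prop)

lemma iteratedDeriv_comp_add_div (n : ℕ) (h : ℝ → ℝ) (c r : ℝ) :
    iteratedDeriv n (fun t => h ((c + t) / r)) =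
      fun u => r⁻¹ ^ n * iteratedDeriv n h ((c + u) / r) := by
  induction n with
  | zero => simp only [iteratedDeriv_zero, pow_zero, one_mul]
  | succ n ih =>
    funext u
    have chain_rule := deriv_comp_mul_left r⁻¹ (iteratedDeriv n h) (c + u)
    rw [iteratedDeriv_succ, ih, deriv_const_mul_field, iteratedDeriv_succ, pow_succ, mul_assoc]
    simp only [div_eq_inv_mul]
    rw [deriv_comp_const_add (fun t => iteratedDeriv n h (r⁻¹ * t)), chain_rule, smul_eq_mul]

lemma pd_cell (a b N k l : ℕ) (g : ℝ → ℝ → ℝ) :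
    pd a b (cell N k l g) = (N : ℝ)⁻¹ ^ (a + b) • cell N k l (pd a b g) := by
  funext u v
  have inner (t : ℝ) : iteratedDeriv b (cell N k l g t) v =
      (N : ℝ)⁻¹ ^ b * iteratedDeriv b (g ((k + t) / N)) ((l + v) / N) :=
    congrFun (iteratedDeriv_comp_add_div b _ _ _) v
  simp only [pd, inner, iteratedDeriv_const_mul_field]
  rw [iteratedDeriv_comp_add_div a fun t => iteratedDeriv b (g t) ((l + v) / N), ← mul_assoc,
    ← pow_add, add_comm b a]
  rfl

lemma sum_integral_comp_add_div (hN : 0 < N) (hh : Continuous h) :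
    ∑ k ∈ Finset.range N, ∫ u in (0 : ℝ)..1, h ((k + u) / N) = N * ∫ u in (0 : ℝ)..1, h u := by
  have hN0 : (N : ℝ) ≠ 0 := by exact_mod_cast hN.ne'
  have rescale (k : ℕ) : ∫ u in (0 : ℝ)..1, h ((k + u) / N) =
      N * ∫ u in (k / N : ℝ)..((k + 1 : ℕ) / N : ℝ), h u := by
    simp only [add_div]
    rw [intervalIntegral.integral_comp_add_div h hN0, smul_eq_mul, zero_div, add_zero, ← add_div,
      Nat.cast_succ]
  simp only [rescale]
  rw [← Finset.mul_sum, intervalIntegral.sum_integral_adjacent_intervals (a := fun k : ℕ => k / N)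
    fun k _ => hh.intervalIntegrable _ _]
  simp only [Nat.cast_zero, zero_div, div_self hN0]

lemma sum_integral_cell (hN : 0 < N) (hf : Continuous (uncurry f)) :
    ∑ k ∈ Finset.range N, ∑ l ∈ Finset.range N,
        ∫ u in (0 : ℝ)..1, ∫ v in (0 : ℝ)..1, cell N k l f u v =
      N ^ 2 * ∫ u in (0 : ℝ)..1, ∫ v in (0 : ℝ)..1, f u v := by
  have sum_rows (k : ℕ) :
      ∑ l ∈ Finset.range N, ∫ u in (0 : ℝ)..1, ∫ v in (0 : ℝ)..1, cell N k l f u v =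
        N * ∫ u in (0 : ℝ)..1, ∫ v in (0 : ℝ)..1, f ((k + u) / N) v := by
    rw [← intervalIntegral.integral_finsetSum fun l _ =>
        (continuous_integral_snd (f := cell N k l f)
          (contDiff_zero.1 (contDiff_cell (n := 0) (contDiff_zero.2 hf)))).intervalIntegrable 0 1,
      ← intervalIntegral.integral_const_mul]
    congr 1
    funext u
    exact sum_integral_comp_add_div hN (hf.uncurry_left _)
  simp only [sum_rows]
  rw [← Finset.mul_sum, sum_integral_comp_add_div hN (continuous_integral_snd hf), sq, mul_assoc]

lemma sum_Omega2M_cell (hN : 0 < N) (hg : ContDiff ℝ m (uncurry g)) :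
    ∑ k ∈ Finset.range N, ∑ l ∈ Finset.range N, Omega2M m (cell N k l g) =
      N ^ 2 * ((N : ℝ)⁻¹ ^ m) ^ 2 * Omega2M m g := by
  have Omega2M_cell (k l : ℕ) : Omega2M m (cell N k l g) = ((N : ℝ)⁻¹ ^ m) ^ 2 *
      ∑ a ∈ antidiagonal m, ∫ u in (0 : ℝ)..1, ∫ v in (0 : ℝ)..1,
        cell N k l (fun u v => pd a.1 a.2 g u v ^ 2) u v := by
    rw [Omega2M_eq_sum_antidiagonal (contDiff_cell hg), Finset.mul_sum]
    refine Finset.sum_congr rfl fun a ha => ?_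
    simp only [pd_cell, mem_antidiagonal.1 ha, Pi.smul_apply, smul_eq_mul, mul_pow,
      intervalIntegral.integral_const_mul, cell]
  have hcont (a : ℕ × ℕ) (ha : a ∈ antidiagonal m) :
      Continuous (uncurry fun u v => pd a.1 a.2 g u v ^ 2) :=
    (continuous_pow 2).comp (continuous_pd hg (mem_antidiagonal.1 ha).le)
  simp only [Omega2M_cell, ← Finset.mul_sum]
  rw [Omega2M_eq_sum_antidiagonal hg, mul_right_comm, mul_comm, Finset.mul_sum]
  congr 1
  simp only [Finset.sum_comm (t := antidiagonal m)]
  exact Finset.sum_congr rfl fun a ha => sum_integral_cell hN (hcont a ha)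

end Cells

/-! ### Counting lattice points -/

section LatticeCounting

open Real

variable {ι : Type*} [Fintype ι] {t ε : ℝ}

/-- The logarithm of the partition function `∑ k : ℤ, exp (-t * |k|)`. -/
def logPartition (t : ℝ) : ℝ := log (1 + 2 / (exp t - 1))

lemma logPartition_le_log (ht : 0 < t) : logPartition t ≤ log (1 + 2 / t) := by
  have hexp : t ≤ exp t - 1 := le_sub_iff_add_le.2 (add_one_le_exp t)
  have hpos : 0 < exp t - 1 := ht.trans_le hexp
  unfold logPartition
  gcongr

lemma logPartition_le_exp_neg (ht : 1 ≤ t) : logPartition t ≤ 4 * exp (-t) := by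
  have two_le_exp : 2 ≤ exp t := by linarith [add_one_le_exp t]
  calc logPartition t ≤ 2 / (exp t - 1) := by
        have hpos : 0 < exp t - 1 := by linarith
        exact (log_le_sub_one_of_pos (by positivity)).trans_eq (add_sub_cancel_left _ _)
    _ ≤ 2 / (exp t / 2) := by gcongr; linarith
    _ = 4 * exp (-t) := by rw [exp_neg]; ring

lemma hasSum_exp_neg_mul_abs (ht : 0 < t) :
    HasSum (fun k : ℤ => exp (-t * |(k : ℝ)|)) (exp (logPartition t)) := by
  have x_lt_one : exp (-t) < 1 := exp_lt_one_iff.2 (neg_lt_zero.2 ht)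
  have geometric := hasSum_geometric_of_lt_one (exp_pos (-t)).le x_lt_one
  have hpos := sub_pos.2 (one_lt_exp_iff.2 ht)
  have value : exp (logPartition t) =
      (1 - exp (-t))⁻¹ + exp (-t) * (1 - exp (-t))⁻¹ := by
    rw [logPartition, exp_log (by positivity), exp_neg]
    field_simp
    ring
  rw [value]
  refine HasSum.of_nat_of_neg_add_one (geometric.congr_fun ?_)
    ((geometric.mul_left (exp (-t))).congr_fun ?_) <;> intro n
  · rw [← exp_nat_mul, Int.cast_natCast, Nat.abs_cast, mul_comm]
  · rw [← pow_succ', ← exp_nat_mul, Int.cast_neg, abs_neg, mul_comm]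
    norm_cast

/-- Each point of the lattice ball has weight at least `1` under the product weight
`exp (t * R) * ∏ i, exp (-t * |z i|)`, whose total mass is explicit. -/
lemma exists_finset_sum_abs_le (R : ℝ) (ht : 0 < t) :
    ∃ Z : Finset (ι → ℤ), (∀ z : ι → ℤ, ∑ i, |(z i : ℝ)| ≤ R → z ∈ Z) ∧
      (Z.card : ℝ) ≤ exp (t * R + Fintype.card ι * logPartition t) := by
  classical
  let side : Finset ℤ := Finset.Icc (-⌈R⌉) ⌈R⌉
  let box : Finset (ι → ℤ) := Fintype.piFinset fun _ => side
  refine ⟨{z ∈ box | ∑ i, |(z i : ℝ)| ≤ R}, fun z hz => ?_, ?_⟩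
  · refine Finset.mem_filter.2 ⟨Fintype.mem_piFinset.2 fun i => ?_, hz⟩
    have coord_le : |(z i : ℝ)| ≤ R :=
      (Finset.single_le_sum (f := fun i => |(z i : ℝ)|) (fun i _ => abs_nonneg _)
        (Finset.mem_univ i)).trans hz
    exact Finset.mem_Icc.2 (abs_le.1 (by exact_mod_cast coord_le.trans (Int.le_ceil R)))
  · calc (Finset.card {z ∈ box | ∑ i, |(z i : ℝ)| ≤ R} : ℝ)
        ≤ ∑ z ∈ box with ∑ i, |(z i : ℝ)| ≤ R,
            exp (t * R) * ∏ i, exp (-t * |(z i : ℝ)|) := by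
          rw [Finset.card_eq_sum_ones, Nat.cast_sum]
          refine Finset.sum_le_sum fun z hz => ?_
          rw [← exp_sum, ← exp_add, ← Finset.mul_sum, neg_mul, ← sub_eq_add_neg, ← mul_sub,
            Nat.cast_one]
          exact one_le_exp (mul_nonneg ht.le (sub_nonneg.2 (Finset.mem_filter.1 hz).2))
      _ ≤ ∑ z ∈ box, exp (t * R) * ∏ i, exp (-t * |(z i : ℝ)|) :=
          Finset.sum_le_sum_of_subset_of_nonneg (Finset.filter_subset _ _)
            fun z _ _ => by positivity
      _ = exp (t * R) * (∑ k ∈ side, exp (-t * |(k : ℝ)|)) ^ Fintype.card ι := by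
          rw [← Finset.mul_sum, Finset.sum_prod_piFinset side fun _ (k : ℤ) => exp (-t * |(k : ℝ)|),
            Finset.prod_const, Finset.card_univ]
      _ ≤ exp (t * R) * exp (logPartition t) ^ Fintype.card ι := by
          gcongr
          exact sum_le_hasSum _ (fun _ _ => (exp_pos _).le) (hasSum_exp_neg_mul_abs ht)
      _ = exp (t * R + Fintype.card ι * logPartition t) := by rw [← exp_nat_mul, ← exp_add]

lemma exists_int_abs_sub_mul_le (hε : 0 < ε) (c : ℝ) :
    ∃ z : ℤ, |c - ε * z| ≤ ε ∧ ε * |(z : ℝ)| ≤ |c| := by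
  wlog hc : 0 ≤ c generalizing c
  · obtain ⟨z, hz, hz'⟩ := this (-c) (by linarith)
    refine ⟨-z, ?_, ?_⟩
    · rwa [Int.cast_neg, mul_neg, sub_neg_eq_add, ← abs_neg, neg_add']
    · rwa [Int.cast_neg, abs_neg, ← abs_neg c]
  have hfloor := Int.floor_nonneg.2 (div_nonneg hc hε.le)
  have floor_le := (le_div_iff₀ hε).1 (Int.floor_le (c / ε))
  have lt_floor := (div_lt_iff₀ hε).1 (Int.lt_floor_add_one (c / ε))
  refine ⟨⌊c / ε⌋, abs_le.2 ⟨by linarith, by linarith⟩, ?_⟩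
  rw [abs_of_nonneg hc, abs_of_nonneg (by exact_mod_cast hfloor)]
  linarith

lemma exists_quantization_l1 (R : ℝ) (hε : 0 < ε) (ht : 0 < t) :
    ∃ Z : Finset (ι → ℤ), (Z.card : ℝ) ≤ exp (t * (R / ε) + Fintype.card ι * logPartition t) ∧
      ∀ c : ι → ℝ, ∑ i, |c i| ≤ R →
        ∃ z ∈ Z, ∀ i, |c i - ε * z i| ≤ ε ∧ ε * |(z i : ℝ)| ≤ |c i| := by
  obtain ⟨Z, hZ, hcard⟩ := exists_finset_sum_abs_le (ι := ι) (R / ε) ht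
  refine ⟨Z, hcard, fun c hc => ?_⟩
  choose z hz using fun i => exists_int_abs_sub_mul_le hε (c i)
  refine ⟨z, hZ z ?_, hz⟩
  rw [le_div_iff₀' hε, Finset.mul_sum]
  exact (Finset.sum_le_sum fun i _ => (hz i).2).trans hc

lemma abs_intCast_le_sq (z : ℤ) : |(z : ℝ)| ≤ (z : ℝ) ^ 2 := by
  have := Int.natAbs_le_self_sq z
  rw [Int.natCast_natAbs] at this
  exact_mod_cast this

/-- Integers satisfy `|z| ≤ z ^ 2`, so quantising the `ℓ²` ball of radius `√E` also gives points of
a lattice ball for the `ℓ¹` norm. -/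
lemma exists_quantization_l2 (E : ℝ) (hε : 0 < ε) (ht : 0 < t) :
    ∃ Z : Finset (ι → ℤ),
      (Z.card : ℝ) ≤ exp (t * (E / ε ^ 2) + Fintype.card ι * logPartition t) ∧
      ∀ c : ι → ℝ, ∑ i, c i ^ 2 ≤ E → ∃ z ∈ Z, ∀ i, |c i - ε * z i| ≤ ε := by
  obtain ⟨Z, hZ, hcard⟩ := exists_finset_sum_abs_le (ι := ι) (E / ε ^ 2) ht
  refine ⟨Z, hcard, fun c hc => ?_⟩
  choose z hz using fun i => exists_int_abs_sub_mul_le hε (c i)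
  refine ⟨z, hZ z ?_, fun i => (hz i).1⟩
  rw [le_div_iff₀' (by positivity), Finset.mul_sum]
  refine (Finset.sum_le_sum fun i _ => ?_).trans hc
  calc ε ^ 2 * |(z i : ℝ)| ≤ ε ^ 2 * (z i : ℝ) ^ 2 := by gcongr; exact abs_intCast_le_sq _
    _ = (ε * |(z i : ℝ)|) ^ 2 := by rw [mul_pow, sq_abs]
    _ ≤ |c i| ^ 2 := by gcongr; exact (hz i).2
    _ = c i ^ 2 := sq_abs _

end LatticeCounting

/-! ### Nets -/

section Nets

open Real
open scoped Pointwise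

variable {X Y ι : Type*} {S : Set X} {A B : Set (X → ℝ)} {δ δ' η ε K E L L' t : ℝ}

/-- The set `A` of functions has a `δ`-net of log-cardinality at most `L` for the supremum norm on
`S`. The elements of the net need not belong to `A`. -/
def HasNet (S : Set X) (A : Set (X → ℝ)) (δ L : ℝ) : Prop :=
  ∃ T : Finset (X → ℝ), T.card ≤ exp L ∧ ∀ f ∈ A, ∃ t ∈ T, ∀ x ∈ S, |f x - t x| ≤ δ

lemma HasNet.mono (h : HasNet S A δ L) (hδ : δ ≤ δ') (hL : L ≤ L') : HasNet S A δ' L' := by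
  obtain ⟨T, hcard, hT⟩ := h
  refine ⟨T, hcard.trans (exp_le_exp.2 hL), fun f hf => ?_⟩
  obtain ⟨t, ht, hft⟩ := hT f hf
  exact ⟨t, ht, fun x hx => (hft x hx).trans hδ⟩

lemma HasNet.of_approx (h : HasNet S B δ L) (hAB : ∀ f ∈ A, ∃ g ∈ B, ∀ x ∈ S, |f x - g x| ≤ η) :
    HasNet S A (η + δ) L := by
  obtain ⟨T, hcard, hT⟩ := h
  refine ⟨T, hcard, fun f hf => ?_⟩
  obtain ⟨g, hg, hfg⟩ := hAB f hf
  obtain ⟨t, ht, hgt⟩ := hT g hg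
  exact ⟨t, ht, fun x hx => (abs_sub_le _ (g x) _).trans (add_le_add (hfg x hx) (hgt x hx))⟩

lemma HasNet.comp (h : HasNet S A δ L) {S' : Set Y} {φ : Y → X} (hφ : Set.MapsTo φ S' S) :
    HasNet S' {f | ∃ g ∈ A, f = g ∘ φ} δ L := by
  classical
  obtain ⟨T, hcard, hT⟩ := h
  refine ⟨T.image (· ∘ φ), (Nat.cast_le.2 Finset.card_image_le).trans hcard, ?_⟩
  rintro _ ⟨g, hg, rfl⟩
  obtain ⟨t, ht, hgt⟩ := hT g hg
  exact ⟨t ∘ φ, Finset.mem_image_of_mem _ ht, fun y hy => hgt _ (hφ hy)⟩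

lemma hasNet_zero (S : Set X) : HasNet S 0 0 0 :=
  ⟨{0}, by rw [Finset.card_singleton, Nat.cast_one, exp_zero],
    fun f hf => ⟨0, Finset.mem_singleton_self 0, fun x _ => by
      rw [Set.mem_zero.1 hf, sub_self, abs_zero]⟩⟩

lemma HasNet.add (hA : HasNet S A δ L) (hB : HasNet S B δ' L') :
    HasNet S (A + B) (δ + δ') (L + L') := by
  classical
  obtain ⟨T, hcard, hT⟩ := hA
  obtain ⟨T', hcard', hT'⟩ := hB
  refine ⟨T + T', ?_, ?_⟩
  · calc ((T + T').card : ℝ) ≤ T.card * T'.card := by exact_mod_cast Finset.card_add_le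
      _ ≤ exp L * exp L' := by gcongr
      _ = exp (L + L') := (exp_add L L').symm
  · rintro _ ⟨f, hf, g, hg, rfl⟩
    obtain ⟨t, ht, hft⟩ := hT f hf
    obtain ⟨t', ht', hgt'⟩ := hT' g hg
    refine ⟨t + t', Finset.add_mem_add ht ht', fun x hx => ?_⟩
    simp only [Pi.add_apply, add_sub_add_comm]
    exact (abs_add_le _ _).trans (add_le_add (hft x hx) (hgt' x hx))

lemma HasNet.sum {A : ι → Set (X → ℝ)} {δ L : ι → ℝ} {s : Finset ι}
    (h : ∀ i ∈ s, HasNet S (A i) (δ i) (L i)) :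
    HasNet S (∑ i ∈ s, A i) (∑ i ∈ s, δ i) (∑ i ∈ s, L i) := by
  classical
  induction s using Finset.induction_on with
  | empty => simpa only [Finset.sum_empty] using hasNet_zero S
  | insert i s hi ih =>
    simp only [Finset.sum_insert hi]
    exact (h i (Finset.mem_insert_self i s)).add (ih fun j hj => h j (Finset.mem_insert_of_mem hj))

lemma HasNet.of_dyadic {m : ℕ} (hm : 0 < m)
    (h : ∀ M : ℕ, HasNet S A (E * (1 / 2) ^ (m * M)) (K * 4 ^ M)) (hE : 1 ≤ E) (hK : 0 ≤ K)
    (hδ : 0 < δ) (hδ1 : δ ≤ 1) :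
    HasNet S A δ (4 * K * E ^ (2 / m : ℝ) * δ ^ (-(2 : ℝ) / m)) := by
  set x : ℝ := (E / δ) ^ (m : ℝ)⁻¹ with hx
  have x_pow : x ^ m = E / δ := rpow_inv_natCast_pow (by positivity) hm.ne'
  have x_sq : x ^ 2 = E ^ (2 / m : ℝ) * δ ^ (-(2 : ℝ) / m) := by
    rw [hx, ← rpow_natCast, ← rpow_mul (by positivity), div_rpow (by positivity) hδ.le, neg_div,
      rpow_neg hδ.le, div_eq_mul_inv, Nat.cast_ofNat, inv_mul_eq_div]
  have one_le_x : 1 ≤ x :=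
    one_le_rpow ((one_le_div hδ).2 (hδ1.trans hE)) (by positivity)
  obtain ⟨k, two_pow_le, lt_two_pow⟩ := exists_nat_pow_near one_le_x one_lt_two
  refine (h (k + 1)).mono ?_ ?_
  · rw [mul_comm m, pow_mul, one_div, inv_pow, inv_pow, ← div_eq_mul_inv,
      div_le_comm₀ (by positivity) hδ, ← x_pow]
    gcongr
  · calc K * 4 ^ (k + 1) = 4 * K * (2 ^ k) ^ 2 := by rw [pow_right_comm]; norm_num; ring
      _ ≤ 4 * K * x ^ 2 := by gcongr
      _ = 4 * K * E ^ (2 / m : ℝ) * δ ^ (-(2 : ℝ) / m) := by rw [x_sq]; ring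

/-- The linear combinations of the dictionary `φ` with coefficients in the `ℓ²` ball of radius
`√E`. -/
def squareSummableSpan [Fintype ι] (φ : ι → X → ℝ) (E : ℝ) : Set (X → ℝ) :=
  {f | ∃ c : ι → ℝ, ∑ i, c i ^ 2 ≤ E ∧ f = fun x => ∑ i, c i * φ i x}

lemma hasNet_squareSummableSpan [Fintype ι] {φ : ι → X → ℝ} (hφ : ∀ x ∈ S, ∑ i, |φ i x| ≤ K)
    (E : ℝ) (hε : 0 < ε) (ht : 0 < t) : HasNet S (squareSummableSpan φ E) (ε * K)
      (t * (E / ε ^ 2) + Fintype.card ι * logPartition t) := by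
  classical
  obtain ⟨Z, hcard, hZ⟩ := exists_quantization_l2 (ι := ι) E hε ht
  refine ⟨Z.image fun z x => ∑ i, ε * z i * φ i x,
    (Nat.cast_le.2 Finset.card_image_le).trans hcard, ?_⟩
  rintro _ ⟨c, hc, rfl⟩
  obtain ⟨z, hz, hcz⟩ := hZ c hc
  refine ⟨_, Finset.mem_image_of_mem _ hz, fun x hx => ?_⟩
  calc |∑ i, c i * φ i x - ∑ i, ε * z i * φ i x| = |∑ i, (c i - ε * z i) * φ i x| := by
        simp only [sub_mul, Finset.sum_sub_distrib]
    _ ≤ ∑ i, |(c i - ε * z i) * φ i x| := Finset.abs_sum_le_sum_abs _ _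
    _ ≤ ∑ i, ε * |φ i x| := by
        gcongr with i
        rw [abs_mul]
        exact mul_le_mul_of_nonneg_right (hcz i) (abs_nonneg _)
    _ ≤ ε * K := by
        rw [← Finset.mul_sum]
        exact mul_le_mul_of_nonneg_left (hφ x hx) hε.le

/-- The absolutely convex combinations of one member of each of the sets `A i`. -/
def absConvexCombinations [Fintype ι] (A : ι → Set (X → ℝ)) : Set (X → ℝ) :=
  {f | ∃ (c : ι → ℝ) (g : ι → X → ℝ), ∑ i, |c i| ≤ 1 ∧ (∀ i, g i ∈ A i) ∧
    f = fun x => ∑ i, c i * g i x}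

lemma abs_mul_sub_mul_le {a a' y y' : ℝ} (ha : |a - a'| ≤ ε) (ha' : |a'| ≤ |a|) (hy : |y| ≤ K)
    (hyy' : |y - y'| ≤ δ) : |a * y - a' * y'| ≤ ε * K + |a| * δ :=
  calc |a * y - a' * y'| = |(a - a') * y + a' * (y - y')| := by ring_nf
    _ ≤ |a - a'| * |y| + |a'| * |y - y'| := by
        simpa only [abs_mul] using abs_add_le ((a - a') * y) (a' * (y - y'))
    _ ≤ ε * K + |a| * δ := by gcongr; exact (abs_nonneg _).trans ha

lemma hasNet_absConvexCombinations [Fintype ι] {A : ι → Set (X → ℝ)}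
    (hbdd : ∀ i, ∀ g ∈ A i, ∀ x ∈ S, |g x| ≤ K) (hδ : 0 ≤ δ) (hA : ∀ i, HasNet S (A i) δ L)
    (hε : 0 < ε) (ht : 0 < t) :
    HasNet S (absConvexCombinations A) (ε * (Fintype.card ι * K) + δ)
      (t * (1 / ε) + Fintype.card ι * logPartition t + Fintype.card ι * L) := by
  classical
  obtain ⟨Z, hcard, hZ⟩ := exists_quantization_l1 (ι := ι) 1 hε ht
  choose T hTcard hT using hA
  let combine (z : ι → ℤ) (τ : ι → X → ℝ) (x : X) : ℝ := ∑ i, ε * z i * τ i x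
  refine ⟨Finset.image₂ combine Z (Fintype.piFinset T), ?_, ?_⟩
  · calc ((Finset.image₂ combine Z (Fintype.piFinset T)).card : ℝ)
        ≤ Z.card * ∏ i, ((T i).card : ℝ) := by
          rw [← Nat.cast_prod, ← Fintype.card_piFinset]
          exact_mod_cast Finset.card_image₂_le combine Z (Fintype.piFinset T)
      _ ≤ exp (t * (1 / ε) + Fintype.card ι * logPartition t) * ∏ _i : ι, exp L := by
          gcongr with i
          exact hTcard i
      _ = exp (t * (1 / ε) + Fintype.card ι * logPartition t + Fintype.card ι * L) := by
          rw [Finset.prod_const, Finset.card_univ, ← exp_nat_mul, ← exp_add]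
  · rintro _ ⟨c, g, hc, hg, rfl⟩
    obtain ⟨z, hz, hcz⟩ := hZ c hc
    choose τ hτ hgτ using fun i => hT i (g i) (hg i)
    refine ⟨_, Finset.mem_image₂_of_mem hz (Fintype.mem_piFinset.2 hτ), fun x hx => ?_⟩
    have term_le (i : ι) : |c i * g i x - ε * z i * τ i x| ≤ ε * K + |c i| * δ :=
      abs_mul_sub_mul_le (hcz i).1 (by simpa only [abs_mul, abs_of_pos hε] using (hcz i).2)
        (hbdd i _ (hg i) x hx) (hgτ i x hx)
    calc |∑ i, c i * g i x - ∑ i, ε * z i * τ i x| ≤ ∑ i, |c i * g i x - ε * z i * τ i x| := by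
          rw [← Finset.sum_sub_distrib]
          exact Finset.abs_sum_le_sum_abs _ _
      _ ≤ ∑ i, (ε * K + |c i| * δ) := Finset.sum_le_sum fun i _ => term_le i
      _ = ε * (Fintype.card ι * K) + (∑ i, |c i|) * δ := by
          rw [Finset.sum_add_distrib, Finset.sum_const, Finset.card_univ, nsmul_eq_mul,
            ← Finset.sum_mul, mul_left_comm]
      _ ≤ ε * (Fintype.card ι * K) + δ := by
          gcongr
          exact mul_le_of_le_one_left hδ hc

end Nets

/-! ### Piecewise polynomials on the grid cells -/

section Splines

variable {F : ℕ → ℕ → ℝ → ℝ → ℝ} {m N : ℕ} {E K : ℝ}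

/-- The Lagrange basis of the piecewise polynomials of degree less than `m` on the `N`-grid: the
function with index `(k, a)` is the rescaled `nodeBasis m a` on the cell `k` and zero elsewhere. -/
def splineBasis (N m : ℕ) (i : Fin N × Fin m) (u : ℝ) : ℝ :=
  if cellIndex N u = i.1 then nodeBasis m i.2 (cellCoord N u) else 0

/-- The tensor products of the functions `splineBasis N m`, a basis of the piecewise polynomials
on the `N × N` grid with degree less than `m` in each variable. -/
def tensorSplineBasis (N m : ℕ) (i : (Fin N × Fin m) × (Fin N × Fin m)) (q : ℝ × ℝ) : ℝ :=
  splineBasis N m i.1 q.1 * splineBasis N m i.2 q.2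

lemma sum_splineBasis (hN : 0 < N) (c : ℕ → Fin m → ℝ → ℝ) (hc : ∀ k a, c k a 0 = 0) (u : ℝ) :
    ∑ i : Fin N × Fin m, c i.1 i.2 (splineBasis N m i u) =
      ∑ a, c (cellIndex N u) a (nodeBasis m a (cellCoord N u)) := by
  rw [Fintype.sum_prod_type, Finset.sum_eq_single ⟨cellIndex N u, cellIndex_lt hN u⟩]
  · simp only [splineBasis, if_true]
  · intro k _ hk
    have hne : cellIndex N u ≠ k := fun h => hk (Fin.ext h.symm)
    simp only [splineBasis, if_neg hne, hc, Finset.sum_const_zero]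
  · exact fun h => (h (Finset.mem_univ _)).elim

lemma sum_abs_tensorSplineBasis_le (hN : 0 < N) (hK : ∀ u ∈ I, ∑ a, |nodeBasis m a u| ≤ K) :
    ∀ q ∈ I ×ˢ I, ∑ i, |tensorSplineBasis N m i q| ≤ K ^ 2 := by
  rintro ⟨u, v⟩ ⟨hu, hv⟩
  have sum_abs_le {u : ℝ} (hu : u ∈ I) : ∑ i, |splineBasis N m i u| ≤ K := by
    rw [sum_splineBasis hN (fun _ _ y => |y|) fun _ _ => abs_zero]
    exact hK _ (cellCoord_mem_unitInterval hN hu)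
  have sum_nonneg (u : ℝ) : 0 ≤ ∑ i, |splineBasis N m i u| :=
    Finset.sum_nonneg fun _ _ => abs_nonneg _
  calc ∑ i, |tensorSplineBasis N m i (u, v)|
      = (∑ i, |splineBasis N m i u|) * ∑ i, |splineBasis N m i v| := by
        simp only [Fintype.sum_prod_type (α₁ := Fin N × Fin m), tensorSplineBasis, abs_mul,
          Finset.sum_mul_sum]
    _ ≤ K ^ 2 := by
        rw [sq]
        exact mul_le_mul (sum_abs_le hu) (sum_abs_le hv) (sum_nonneg v)
          ((sum_nonneg u).trans (sum_abs_le hu))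

lemma sum_mul_tensorSplineBasis (hN : 0 < N) (F : ℕ → ℕ → ℝ → ℝ → ℝ) (q : ℝ × ℝ) :
    ∑ i : (Fin N × Fin m) × (Fin N × Fin m),
        F i.1.1 i.2.1 (node m i.1.2) (node m i.2.2) * tensorSplineBasis N m i q =
      glue N (fun k l => tensorInterp m (F k l)) q.1 q.2 := by
  obtain ⟨u, v⟩ := q
  have inner (k : ℕ) (a : Fin m) (y : ℝ) :
      ∑ i : Fin N × Fin m, F k i.1 (node m a) (node m i.2) * (y * splineBasis N m i v) =
        ∑ b, F k (cellIndex N v) (node m a) (node m b) * (y * nodeBasis m b (cellCoord N v)) :=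
    sum_splineBasis hN (fun l b z => F k l (node m a) (node m b) * (y * z))
      (fun _ _ => by rw [mul_zero, mul_zero]) v
  rw [Fintype.sum_prod_type]
  simp only [tensorSplineBasis, inner]
  exact sum_splineBasis hN
    (fun k a y => ∑ b, F k (cellIndex N v) (node m a) (node m b) *
      (y * nodeBasis m b (cellCoord N v)))
    (fun _ _ => by simp only [zero_mul, mul_zero, Finset.sum_const_zero]) u

lemma glue_tensorInterp_mem_squareSummableSpan (hN : 0 < N)
    (hF : ∀ u ∈ I, ∀ v ∈ I,
      ∑ k ∈ Finset.range N, ∑ l ∈ Finset.range N, F k l u v ^ 2 ≤ E) :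
    uncurry (glue N fun k l => tensorInterp m (F k l)) ∈
      squareSummableSpan (tensorSplineBasis N m) (m ^ 2 * E) := by
  refine ⟨fun i => F i.1.1 i.2.1 (node m i.1.2) (node m i.2.2), ?_,
    funext fun q => (sum_mul_tensorSplineBasis hN F q).symm⟩
  have node_sum_le (a b : Fin m) :
      ∑ k : Fin N, ∑ l : Fin N, F k l (node m a) (node m b) ^ 2 ≤ E := by
    have h := hF _ (node_mem_unitInterval a) _ (node_mem_unitInterval b)
    simpa only [Finset.sum_range] using h
  calc ∑ i : (Fin N × Fin m) × (Fin N × Fin m),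
        F i.1.1 i.2.1 (node m i.1.2) (node m i.2.2) ^ 2
      = ∑ a : Fin m, ∑ b : Fin m, ∑ k : Fin N, ∑ l : Fin N,
          F k l (node m a) (node m b) ^ 2 := by
        simp only [Fintype.sum_prod_type]
        rw [Finset.sum_comm]
        refine Finset.sum_congr rfl fun a _ => ?_
        simp only [Finset.sum_comm (s := (Finset.univ : Finset (Fin N)))
          (t := (Finset.univ : Finset (Fin m)))]
    _ ≤ ∑ _a : Fin m, ∑ _b : Fin m, E :=
        Finset.sum_le_sum fun a _ => Finset.sum_le_sum fun b _ => node_sum_le a b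
    _ = m ^ 2 * E := by
        rw [Finset.sum_const, Finset.sum_const, Finset.card_univ, Fintype.card_fin, nsmul_eq_mul,
          nsmul_eq_mul, sq, mul_assoc]

end Splines

/-! ### Multiscale decomposition -/

section Details

variable {g : ℝ → ℝ → ℝ} {m N : ℕ} {b C u v : ℝ}

/-- The detail of `g` at the dyadic level `j` on the cell `(k, l)` of the `2 ^ j × 2 ^ j` grid,
rescaled to the unit square: the error on this cell of the piecewise interpolation of `g` at level
`j - 1`, and `g` itself at level `0`. -/
def detail (m : ℕ) (g : ℝ → ℝ → ℝ) : ℕ → ℕ → ℕ → ℝ → ℝ → ℝ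
  | 0, k, l => cell 1 k l g
  | j + 1, k, l => cell 2 (k % 2) (l % 2)
      (cell (2 ^ j) (k / 2) (l / 2) g - tensorInterp m (cell (2 ^ j) (k / 2) (l / 2) g))

lemma tensorInterp_cell_two_tensorInterp (m k l : ℕ) (G : ℝ → ℝ → ℝ) :
    tensorInterp m (cell 2 k l (tensorInterp m G)) = cell 2 k l (tensorInterp m G) := by
  refine tensorInterp_eq_self ?_
  have affine : cell 2 k l (tensorInterp m G) =
      fun u v => tensorInterp m G (2⁻¹ * k + 2⁻¹ * u) (2⁻¹ * l + 2⁻¹ * v) := by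
    funext u v
    simp only [cell, Nat.cast_ofNat, div_eq_inv_mul, mul_add]
  rw [affine]
  exact tensorPolyLT_comp_affine (tensorInterp_mem_tensorPolyLT m G) _ _ _

/-- Interpolation reproduces polynomials, so that interpolating the details amounts to subtracting
consecutive piecewise interpolants and the sum over the levels telescopes. -/
lemma sum_glue_tensorInterp_detail (m : ℕ) (g : ℝ → ℝ → ℝ) (L : ℕ) :
    ∑ j ∈ Finset.range (L + 1), glue (2 ^ j) (fun k l => tensorInterp m (detail m g j k l)) =
      glue (2 ^ L) fun k l => tensorInterp m (cell (2 ^ L) k l g) := by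
  induction L with
  | zero =>
    rw [Finset.sum_range_one]
    rfl
  | succ L ih =>
    have cell_sub (k l : ℕ) (G H : ℝ → ℝ → ℝ) : cell 2 k l (G - H) = cell 2 k l G - cell 2 k l H :=
      rfl
    have interp_detail (k l : ℕ) : tensorInterp m (detail m g (L + 1) k l) =
        tensorInterp m (cell (2 ^ (L + 1)) k l g) -
          cell 2 (k % 2) (l % 2) (tensorInterp m (cell (2 ^ L) (k / 2) (l / 2) g)) := by
      rw [detail, cell_sub, map_sub, tensorInterp_cell_two_tensorInterp, pow_succ', cell_two_mul]
    rw [Finset.sum_range_succ, ih,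
      ← glue_cell_two (2 ^ L) fun k l => tensorInterp m (cell (2 ^ L) k l g), ← pow_succ']
    funext u v
    simp only [Pi.add_apply, glue, interp_detail, Pi.sub_apply, add_sub_cancel]

lemma sum_range_two_mul_div_two (N : ℕ) (f : ℕ → ℝ) :
    ∑ k ∈ Finset.range (2 * N), f (k / 2) = 2 * ∑ k ∈ Finset.range N, f k := by
  induction N with
  | zero => simp only [mul_zero, Finset.range_zero, Finset.sum_empty]
  | succ N ih =>
    rw [Nat.mul_succ, Finset.sum_range_succ, Finset.sum_range_succ, ih, Finset.sum_range_succ,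
      show (2 * N + 1) / 2 = N by omega, show 2 * N / 2 = N by omega]
    ring

lemma sum_Omega2M_parent_cell (hN : 0 < N) (hg : ContDiff ℝ m (uncurry g)) :
    ∑ k ∈ Finset.range (2 * N), ∑ l ∈ Finset.range (2 * N), Omega2M m (cell N (k / 2) (l / 2) g) =
      4 * (N ^ 2 * ((N : ℝ)⁻¹ ^ m) ^ 2 * Omega2M m g) := by
  have row (k : ℕ) : ∑ l ∈ Finset.range (2 * N), Omega2M m (cell N k (l / 2) g) =
      2 * ∑ l ∈ Finset.range N, Omega2M m (cell N k l g) :=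
    sum_range_two_mul_div_two N fun l => Omega2M m (cell N k l g)
  simp only [row]
  rw [← Finset.mul_sum,
    sum_range_two_mul_div_two N fun k => ∑ l ∈ Finset.range N, Omega2M m (cell N k l g),
    sum_Omega2M_cell hN hg]
  ring

lemma sq_detail_succ_le (hC : ∀ G, ContDiff ℝ m (uncurry G) → ∀ u ∈ I, ∀ v ∈ I,
      |(G - tensorInterp m G) u v| ≤ C * √(Omega2M m G))
    (hg : ContDiff ℝ m (uncurry g)) (j k l : ℕ) (hu : u ∈ I) (hv : v ∈ I) :
    detail m g (j + 1) k l u v ^ 2 ≤ C ^ 2 * Omega2M m (cell (2 ^ j) (k / 2) (l / 2) g) := by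
  have half_mem (k : ℕ) {u : ℝ} (hu : u ∈ I) : ((k % 2 : ℕ) + u) / (2 : ℕ) ∈ I := by
    have : ((k % 2 : ℕ) : ℝ) ≤ 1 := by exact_mod_cast Nat.lt_succ_iff.1 (k.mod_lt two_pos)
    exact div_mem (add_nonneg (Nat.cast_nonneg _) hu.1) (Nat.cast_nonneg _)
      (by push_cast; linarith [hu.2])
  calc detail m g (j + 1) k l u v ^ 2
      ≤ (C * √(Omega2M m (cell (2 ^ j) (k / 2) (l / 2) g))) ^ 2 :=
        sq_le_sq.2 ((hC _ (contDiff_cell hg) _ (half_mem k hu) _ (half_mem l hv)).trans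
          (le_abs_self _))
    _ = C ^ 2 * Omega2M m (cell (2 ^ j) (k / 2) (l / 2) g) := by
        rw [mul_pow, Real.sq_sqrt (Omega2M_nonneg _ _)]

lemma sum_sq_detail_le (hC : ∀ G, ContDiff ℝ m (uncurry G) → ∀ u ∈ I, ∀ v ∈ I,
      |(G - tensorInterp m G) u v| ≤ C * √(Omega2M m G))
    (hg : ContDiff ℝ m (uncurry g)) (hΩ : Omega2M m g ≤ 1)
    (hb : ∀ u ∈ I, ∀ v ∈ I, |g u v| ≤ b) (j : ℕ) (hu : u ∈ I) (hv : v ∈ I) :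
    ∑ k ∈ Finset.range (2 ^ j), ∑ l ∈ Finset.range (2 ^ j), detail m g j k l u v ^ 2 ≤
      (b ^ 2 + C ^ 2 * 4 ^ m) * (4 / 4 ^ m) ^ j := by
  obtain _ | j := j
  · have value : detail m g 0 0 0 u v = g u v := by
      simp only [detail, cell, Nat.cast_zero, Nat.cast_one, zero_add, div_one]
    simp only [pow_zero, Finset.sum_range_one, value, mul_one]
    exact (sq_le_sq.2 ((hb u hu v hv).trans (le_abs_self b))).trans
      (le_add_of_nonneg_right (by positivity))
  have scale : ((2 ^ j : ℕ) : ℝ) ^ 2 * (((2 ^ j : ℕ) : ℝ)⁻¹ ^ m) ^ 2 = (4 / 4 ^ m) ^ j := by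
    have sq_two_pow (i : ℕ) : ((2 : ℝ) ^ i) ^ 2 = 4 ^ i := by rw [pow_right_comm]; norm_num
    push_cast
    rw [sq_two_pow, inv_pow, ← pow_mul, inv_pow, sq_two_pow, mul_comm j, pow_mul, ← div_eq_mul_inv,
      div_pow]
  calc ∑ k ∈ Finset.range (2 ^ (j + 1)), ∑ l ∈ Finset.range (2 ^ (j + 1)),
        detail m g (j + 1) k l u v ^ 2
      ≤ ∑ k ∈ Finset.range (2 ^ (j + 1)), ∑ l ∈ Finset.range (2 ^ (j + 1)),
          C ^ 2 * Omega2M m (cell (2 ^ j) (k / 2) (l / 2) g) :=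
        Finset.sum_le_sum fun k _ => Finset.sum_le_sum fun l _ =>
          sq_detail_succ_le hC hg j k l hu hv
    _ = C ^ 2 * (4 * ((4 / 4 ^ m) ^ j * Omega2M m g)) := by
        simp only [← Finset.mul_sum]
        rw [pow_succ' (2 : ℕ), sum_Omega2M_parent_cell (pow_pos two_pos j) hg, scale]
    _ ≤ C ^ 2 * (4 * ((4 / 4 ^ m) ^ j * 1)) := by gcongr
    _ = C ^ 2 * 4 ^ m * (4 / 4 ^ m) ^ (j + 1) := by
        rw [pow_succ (4 / 4 ^ m : ℝ)]
        field_simp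
    _ ≤ (b ^ 2 + C ^ 2 * 4 ^ m) * (4 / 4 ^ m) ^ (j + 1) := by
        gcongr
        exact le_add_of_nonneg_left (sq_nonneg b)

lemma abs_sub_glue_tensorInterp_le (hm : 2 ≤ m) (hC0 : 0 ≤ C)
    (hC : ∀ G, ContDiff ℝ m (uncurry G) → ∀ u ∈ I, ∀ v ∈ I,
      |(G - tensorInterp m G) u v| ≤ C * √(Omega2M m G))
    (hg : ContDiff ℝ m (uncurry g)) (hΩ : Omega2M m g ≤ 1) (hN : 0 < N) (hu : u ∈ I) (hv : v ∈ I) :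
    |g u v - glue N (fun k l => tensorInterp m (cell N k l g)) u v| ≤ C * (N : ℝ)⁻¹ := by
  set G := cell N (cellIndex N u) (cellIndex N v) g
  have Omega_le : Omega2M m G ≤ (N : ℝ)⁻¹ ^ 2 := by
    have hN1 : (N : ℝ)⁻¹ ≤ 1 := inv_le_one_of_one_le₀ (by exact_mod_cast hN)
    have row_nonneg (k : ℕ) : 0 ≤ ∑ l ∈ Finset.range N, Omega2M m (cell N k l g) :=
      Finset.sum_nonneg fun _ _ => Omega2M_nonneg _ _
    calc Omega2M m G ≤ ∑ l ∈ Finset.range N, Omega2M m (cell N (cellIndex N u) l g) :=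
          Finset.single_le_sum (f := fun l => Omega2M m (cell N (cellIndex N u) l g))
            (fun _ _ => Omega2M_nonneg _ _) (Finset.mem_range.2 (cellIndex_lt hN v))
      _ ≤ ∑ k ∈ Finset.range N, ∑ l ∈ Finset.range N, Omega2M m (cell N k l g) :=
          Finset.single_le_sum (fun k _ => row_nonneg k) (Finset.mem_range.2 (cellIndex_lt hN u))
      _ = N ^ 2 * ((N : ℝ)⁻¹ ^ m) ^ 2 * Omega2M m g := sum_Omega2M_cell hN hg
      _ ≤ N ^ 2 * ((N : ℝ)⁻¹ ^ 2) ^ 2 * 1 := by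
          have := Omega2M_nonneg m g
          have := pow_le_pow_of_le_one (by positivity) hN1 hm
          gcongr
      _ = (N : ℝ)⁻¹ ^ 2 := by field_simp
  calc |g u v - glue N (fun k l => tensorInterp m (cell N k l g)) u v|
      = |(G - tensorInterp m G) (cellCoord N u) (cellCoord N v)| := by
        conv_lhs => rw [← congrFun₂ (glue_cell hN g) u v]
        rfl
    _ ≤ C * √(Omega2M m G) := hC G (contDiff_cell hg) _ (cellCoord_mem_unitInterval hN hu) _
        (cellCoord_mem_unitInterval hN hv)
    _ ≤ C * (N : ℝ)⁻¹ := by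
        gcongr
        exact Real.sqrt_le_iff.2 ⟨by positivity, Omega_le⟩

end Details

/-! ### Entropy of the bivariate components -/

section Scales

open Real

variable {A r : ℝ} {m : ℕ}

lemma sum_pow_dist_le (hr0 : 0 ≤ r) (hr1 : r < 1) (M n : ℕ) :
    ∑ j ∈ Finset.range n, r ^ Nat.dist j M ≤ 2 * (1 - r)⁻¹ := by
  have geometric (n : ℕ) : ∑ i ∈ Finset.range n, r ^ i ≤ (1 - r)⁻¹ := by
    rw [← tsum_geometric_of_lt_one hr0 hr1]
    exact (summable_geometric_of_lt_one hr0 hr1).sum_le_tsum _ fun i _ => pow_nonneg hr0 i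
  calc ∑ j ∈ Finset.range n, r ^ Nat.dist j M
      ≤ ∑ j ∈ Finset.range (M + n), r ^ Nat.dist j M :=
        Finset.sum_le_sum_of_subset_of_nonneg (Finset.range_mono (Nat.le_add_left n M))
          fun _ _ _ => pow_nonneg hr0 _
    _ = ∑ j ∈ Finset.range M, r ^ (j + 1) + ∑ i ∈ Finset.range n, r ^ i := by
        rw [Finset.sum_range_add, ← Finset.sum_range_reflect fun j => r ^ (j + 1)]
        refine congrArg₂ (· + ·) (Finset.sum_congr rfl fun j hj => ?_)
          (Finset.sum_congr rfl fun i _ => ?_)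
        · have := Finset.mem_range.1 hj
          rw [Nat.dist_eq_sub_of_le this.le]
          congr 1
          omega
        · rw [Nat.dist_eq_sub_of_le_right (Nat.le_add_right M i), Nat.add_sub_cancel_left]
    _ ≤ ∑ j ∈ Finset.range M, r ^ j + ∑ i ∈ Finset.range n, r ^ i := by
        gcongr ?_ + _
        exact Finset.sum_le_sum fun j _ => pow_le_pow_of_le_one hr0 hr1.le j.le_succ
    _ ≤ 2 * (1 - r)⁻¹ := by linarith [geometric M, geometric n]

/-- The quantisation step for the details of level `j` when the target accuracy is
`2 ^ (-m * M)`. The factor `3 / 4` makes the errors summable over the levels, and it is so close to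
`1` that the log-cardinalities are summable as well. -/
def levelMesh (m M j : ℕ) : ℝ := (1 / 2) ^ (m * M) * (3 / 4) ^ Nat.dist j M

lemma levelMesh_sq (m M j : ℕ) :
    levelMesh m M j ^ 2 = (4 ^ m)⁻¹ ^ M * (9 / 16) ^ Nat.dist j M := by
  rw [levelMesh, mul_pow, pow_right_comm, pow_right_comm (3 / 4 : ℝ), pow_mul, ← inv_pow]
  norm_num

lemma div_levelMesh_sq_coarse (m j d : ℕ) :
    (4 / 4 ^ m) ^ j / levelMesh m (j + d) j ^ 2 = 4 ^ j * (4 ^ m * (16 / 9)) ^ d := by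
  rw [levelMesh_sq, Nat.dist_eq_sub_of_le (Nat.le_add_right j d), Nat.add_sub_cancel_left, pow_add,
    div_pow, inv_pow, inv_pow, mul_pow, div_pow, div_pow]
  field_simp

lemma div_levelMesh_sq_fine_le (hm : 2 ≤ m) (M d : ℕ) :
    (4 / 4 ^ m) ^ (M + d) / levelMesh m M (M + d) ^ 2 ≤ 4 ^ M * (4 / 9) ^ d := by
  rw [levelMesh_sq, Nat.dist_eq_sub_of_le_right (Nat.le_add_right M d), Nat.add_sub_cancel_left]
  calc (4 / 4 ^ m) ^ (M + d) / ((4 ^ m)⁻¹ ^ M * (9 / 16) ^ d)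
      = (4 : ℝ) ^ M * (4 / 4 ^ m * (16 / 9)) ^ d := by
        rw [pow_add, mul_pow, div_pow, div_pow, div_pow, div_pow, inv_pow]
        field_simp
    _ ≤ 4 ^ M * (4 / 4 ^ 2 * (16 / 9)) ^ d := by
        gcongr
        norm_num
    _ = 4 ^ M * (4 / 9) ^ d := by norm_num

lemma logPartition_inv_four_pow_le (m d : ℕ) :
    logPartition (4 ^ ((m + 1) * d))⁻¹ ≤ 2 * (m + 1) * 2 ^ d := by
  have one_le : (1 : ℝ) ≤ 4 ^ ((m + 1) * d) := one_le_pow₀ (by norm_num)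
  have log_four_le : log 4 ≤ 2 := by
    rw [show (4 : ℝ) = 2 ^ 2 by norm_num, log_pow]
    push_cast
    linarith [log_two_lt_d9]
  have succ_le : (d + 1 : ℝ) ≤ 2 ^ d := by exact_mod_cast Nat.lt_two_pow_self
  calc logPartition (4 ^ ((m + 1) * d))⁻¹ ≤ log (1 + 2 / (4 ^ ((m + 1) * d))⁻¹) :=
        logPartition_le_log (by positivity)
    _ ≤ log (4 ^ (1 + (m + 1) * d)) := by
        gcongr
        rw [div_inv_eq_mul, pow_add, pow_one]
        linarith
    _ = (1 + (m + 1) * d) * log 4 := by rw [log_pow]; push_cast; rfl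
    _ ≤ (1 + (m + 1) * d) * 2 := by gcongr
    _ ≤ 2 * (m + 1) * (d + 1) := by nlinarith [m.cast_nonneg (α := ℝ)]
    _ ≤ 2 * (m + 1) * 2 ^ d := by gcongr

lemma coarse_cost_le (hA : 0 ≤ A) (m j d : ℕ) :
    (4 ^ ((m + 1) * d))⁻¹ * (A * (4 ^ j * (4 ^ m * (16 / 9)) ^ d)) +
        (2 ^ j * m) ^ 2 * logPartition (4 ^ ((m + 1) * d))⁻¹ ≤
      4 ^ (j + d) * (2 * A + 4 * m ^ 2 * (m + 1)) * (8 / 9) ^ d := by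
  have one_le : (1 : ℝ) ≤ 2 ^ d := one_le_pow₀ one_le_two
  have ratio_le : (4 ^ m * (16 / 9) : ℝ) ^ d ≤ 4 ^ ((m + 1) * d) := by
    rw [pow_mul, pow_succ]
    gcongr
    norm_num
  calc (4 ^ ((m + 1) * d))⁻¹ * (A * (4 ^ j * (4 ^ m * (16 / 9)) ^ d)) +
        (2 ^ j * m) ^ 2 * logPartition (4 ^ ((m + 1) * d))⁻¹
      ≤ (4 ^ ((m + 1) * d))⁻¹ * (A * (4 ^ j * 4 ^ ((m + 1) * d))) +
          (2 ^ j * m) ^ 2 * (2 * (m + 1) * 2 ^ d) := by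
        gcongr
        exact logPartition_inv_four_pow_le m d
    _ = 4 ^ j * (A * 1 + 2 * m ^ 2 * (m + 1) * 2 ^ d) := by
        rw [mul_pow, pow_right_comm]
        field_simp
        norm_num
        ring
    _ ≤ 4 ^ j * (2 * A * 2 ^ d + 4 * m ^ 2 * (m + 1) * 2 ^ d) := by gcongr <;> linarith
    _ = 4 ^ j * (2 * A + 4 * m ^ 2 * (m + 1)) * 2 ^ d := by ring
    _ ≤ 4 ^ j * (2 * A + 4 * m ^ 2 * (m + 1)) * (4 * (8 / 9)) ^ d := by
        gcongr
        norm_num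
    _ = 4 ^ (j + d) * (2 * A + 4 * m ^ 2 * (m + 1)) * (8 / 9) ^ d := by
        rw [mul_pow, pow_add]
        ring

lemma fine_cost_le (hA : 0 ≤ A) (m M : ℕ) {d : ℕ} (hd : 1 ≤ d) :
    2 * d * (A * (4 ^ M * (4 / 9) ^ d)) + (2 ^ (M + d) * m) ^ 2 * logPartition (2 * d) ≤
      4 ^ M * (2 * A + 4 * m ^ 2 * (m + 1)) * (8 / 9) ^ d := by
  have hd' : (1 : ℝ) ≤ d := by exact_mod_cast hd
  have le_two_pow : (d : ℝ) ≤ 2 ^ d := by exact_mod_cast (Nat.lt_two_pow_self (n := d)).le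
  have exp_neg_two_le : exp (-2) ≤ 2 / 9 := by
    rw [exp_neg, inv_le_comm₀ (exp_pos 2) (by norm_num)]
    linarith [quadratic_le_exp_of_nonneg (x := 2) zero_le_two]
  have logPartition_le : logPartition (2 * d) ≤ 4 * (2 / 9) ^ d := by
    refine (logPartition_le_exp_neg (by linarith)).trans ?_
    rw [show -(2 * d : ℝ) = d * -2 by ring, exp_nat_mul]
    gcongr
  calc 2 * d * (A * (4 ^ M * (4 / 9) ^ d)) + (2 ^ (M + d) * m) ^ 2 * logPartition (2 * d)
      ≤ 2 * 2 ^ d * (A * (4 ^ M * (4 / 9) ^ d)) + (2 ^ (M + d) * m) ^ 2 * (4 * (2 / 9) ^ d) := by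
        gcongr
    _ = 4 ^ M * (2 * A + 4 * m ^ 2 * 1) * (8 / 9) ^ d := by
        rw [mul_pow, pow_right_comm, pow_add, show (8 / 9 : ℝ) = 2 * (4 / 9) by norm_num,
          mul_pow, show (4 / 9 : ℝ) = 2 * (2 / 9) by norm_num, mul_pow]
        norm_num
        rw [show (4 : ℝ) ^ d = 2 ^ d * 2 ^ d by rw [← mul_pow]; norm_num]
        ring
    _ ≤ 4 ^ M * (2 * A + 4 * m ^ 2 * (m + 1)) * (8 / 9) ^ d := by
        gcongr
        exact le_add_of_nonneg_left m.cast_nonneg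

lemma exists_level_cost_le (hm : 2 ≤ m) (hA : 0 ≤ A) (M j : ℕ) : ∃ t : ℝ, 0 < t ∧
    t * (A * (4 / 4 ^ m) ^ j / levelMesh m M j ^ 2) + (2 ^ j * m) ^ 2 * logPartition t ≤
      4 ^ M * (2 * A + 4 * m ^ 2 * (m + 1)) * (8 / 9) ^ Nat.dist j M := by
  rcases le_or_gt j M with h | h
  · obtain ⟨d, rfl⟩ := Nat.exists_eq_add_of_le h
    rw [mul_div_assoc, div_levelMesh_sq_coarse, Nat.dist_eq_sub_of_le h, Nat.add_sub_cancel_left]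
    exact ⟨_, by positivity, coarse_cost_le hA m j d⟩
  · obtain ⟨d, rfl⟩ := Nat.exists_eq_add_of_le h.le
    have hd : 1 ≤ d := by omega
    refine ⟨2 * d, by positivity, ?_⟩
    rw [mul_div_assoc, Nat.dist_eq_sub_of_le_right h.le, Nat.add_sub_cancel_left]
    refine le_trans ?_ (fine_cost_le hA m M hd)
    gcongr
    exact div_levelMesh_sq_fine_le hm M d

end Scales

section SmoothBall

open scoped Pointwise

variable {A C K : ℝ} {m : ℕ}

/-- The class `𝒢_b` of the bivariate components: the functions of class `C^m` on the plane whose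
`m`-th order penalty on the unit square is at most `1` and whose absolute value there is at most
`b`. -/
def smoothBall (m : ℕ) (b : ℝ) : Set (ℝ × ℝ → ℝ) :=
  {f | ContDiff ℝ m f ∧ Omega2M m (curry f) ≤ 1 ∧ ∀ q ∈ I ×ˢ I, |f q| ≤ b}

/-- The piecewise polynomials at the dyadic level `j` whose coefficients decay like those of the
details of a function in `smoothBall m b`. -/
def detailSpace (m : ℕ) (A : ℝ) (j : ℕ) : Set (ℝ × ℝ → ℝ) :=
  squareSummableSpan (tensorSplineBasis (2 ^ j) m) (A * (4 / 4 ^ m) ^ j)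

lemma hasNet_detailSpace (hm : 2 ≤ m) (hA : 0 ≤ A) (hK : ∀ u ∈ I, ∑ a, |nodeBasis m a u| ≤ K)
    (M j : ℕ) : HasNet (I ×ˢ I) (detailSpace m A j) (levelMesh m M j * K ^ 2)
      (4 ^ M * (2 * A + 4 * m ^ 2 * (m + 1)) * (8 / 9) ^ Nat.dist j M) := by
  obtain ⟨t, ht, hcost⟩ := exists_level_cost_le hm hA M j
  have hmesh : 0 < levelMesh m M j := by unfold levelMesh; positivity
  refine (hasNet_squareSummableSpan (sum_abs_tensorSplineBasis_le (pow_pos two_pos j) hK) _ hmesh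
    ht).mono le_rfl (le_of_eq_of_le ?_ hcost)
  simp only [Fintype.card_prod, Fintype.card_fin, sq]
  push_cast
  rfl

lemma hasNet_sum_detailSpace (hm : 2 ≤ m) (hA : 0 ≤ A)
    (hK : ∀ u ∈ I, ∑ a, |nodeBasis m a u| ≤ K) (M n : ℕ) :
    HasNet (I ×ˢ I) (∑ j ∈ Finset.range n, detailSpace m A j) (8 * K ^ 2 * (1 / 2) ^ (m * M))
      (18 * (2 * A + 4 * m ^ 2 * (m + 1)) * 4 ^ M) := by
  refine (HasNet.sum fun j _ => hasNet_detailSpace hm hA hK M j).mono ?_ ?_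
  · calc ∑ j ∈ Finset.range n, levelMesh m M j * K ^ 2
        = (1 / 2) ^ (m * M) * (∑ j ∈ Finset.range n, (3 / 4) ^ Nat.dist j M) * K ^ 2 := by
          simp only [levelMesh, Finset.sum_mul, Finset.mul_sum]
      _ ≤ (1 / 2) ^ (m * M) * (2 * (1 - 3 / 4)⁻¹) * K ^ 2 := by
          gcongr
          exact sum_pow_dist_le (by norm_num) (by norm_num) M n
      _ = 8 * K ^ 2 * (1 / 2) ^ (m * M) := by ring
  · rw [← Finset.mul_sum]
    calc 4 ^ M * (2 * A + 4 * m ^ 2 * (m + 1)) *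
          ∑ j ∈ Finset.range n, (8 / 9 : ℝ) ^ Nat.dist j M
        ≤ 4 ^ M * (2 * A + 4 * m ^ 2 * (m + 1)) * (2 * (1 - 8 / 9)⁻¹) := by
          gcongr
          exact sum_pow_dist_le (by norm_num) (by norm_num) M n
      _ = 18 * (2 * A + 4 * m ^ 2 * (m + 1)) * 4 ^ M := by ring

lemma exists_sum_detailSpace_abs_sub_le (hm : 2 ≤ m) (hC0 : 0 ≤ C)
    (hC : ∀ G, ContDiff ℝ m (uncurry G) → ∀ u ∈ I, ∀ v ∈ I,
      |(G - tensorInterp m G) u v| ≤ C * √(Omega2M m G)) {b : ℝ} {f : ℝ × ℝ → ℝ}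
    (hf : f ∈ smoothBall m b) (L : ℕ) :
    ∃ h ∈ ∑ j ∈ Finset.range (L + 1), detailSpace m (m ^ 2 * (b ^ 2 + C ^ 2 * 4 ^ m)) j,
      ∀ q ∈ I ×ˢ I, |f q - h q| ≤ C * (1 / 2) ^ L := by
  obtain ⟨hsmooth, hΩ, hb⟩ := hf
  have hsmooth' : ContDiff ℝ m (uncurry (curry f)) := by rwa [uncurry_curry]
  refine ⟨∑ j ∈ Finset.range (L + 1),
    uncurry (glue (2 ^ j) fun k l => tensorInterp m (detail m (curry f) j k l)),
    Set.finsetSum_mem_finsetSum _ _ _ fun j _ => ?_, ?_⟩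
  · rw [detailSpace, mul_assoc]
    exact glue_tensorInterp_mem_squareSummableSpan (pow_pos two_pos j) fun u hu v hv =>
      sum_sq_detail_le hC hsmooth' hΩ (fun u hu v hv => hb (u, v) ⟨hu, hv⟩) j hu hv
  · rintro ⟨u, v⟩ ⟨hu, hv⟩
    have telescope := congrFun₂ (sum_glue_tensorInterp_detail m (curry f) L) u v
    have error_le :=
      abs_sub_glue_tensorInterp_le hm hC0 hC hsmooth' hΩ (pow_pos two_pos L) hu hv
    rw [← telescope] at error_le
    simpa only [Finset.sum_apply, uncurry_apply_pair, curry_apply, Nat.cast_pow, Nat.cast_ofNat,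
      one_div, inv_pow] using error_le

theorem exists_hasNet_smoothBall (hm : 2 ≤ m) (b : ℝ) :
    ∃ C : ℝ, 0 ≤ C ∧ ∀ δ : ℝ, 0 < δ → δ ≤ 1 →
      HasNet (I ×ˢ I) (smoothBall m b) δ (C * δ ^ (-(2 : ℝ) / m)) := by
  obtain ⟨C, hC0, hC⟩ := exists_abs_sub_tensorInterp_le hm
  obtain ⟨K, -, hK⟩ := exists_sum_abs_nodeBasis_le m
  set A := m ^ 2 * (b ^ 2 + C ^ 2 * 4 ^ m)
  have hA : 0 ≤ A := by positivity
  have dyadic (M : ℕ) : HasNet (I ×ˢ I) (smoothBall m b)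
      ((C + 8 * K ^ 2 + 1) * (1 / 2) ^ (m * M)) (18 * (2 * A + 4 * m ^ 2 * (m + 1)) * 4 ^ M) := by
    refine ((hasNet_sum_detailSpace hm hA hK M (m * M + 1)).of_approx fun f hf =>
      exists_sum_detailSpace_abs_sub_le hm hC0 hC hf (m * M)).mono ?_ le_rfl
    rw [← add_mul]
    exact mul_le_mul_of_nonneg_right (le_add_of_nonneg_right zero_le_one) (by positivity)
  exact ⟨_, by positivity, fun δ hδ hδ1 => HasNet.of_dyadic (by positivity) dyadic
    (le_add_of_nonneg_left (by positivity)) (by positivity) hδ hδ1⟩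

end SmoothBall

/-! ### Sparse absolutely convex combinations -/

section SparseCombinations

open Real

variable {X ι : Type*} {S : Set X} {b δ K L : ℝ} {m p : ℕ} {J : Finset (Fin p × Fin p)}

/-- The weights are quantised with the step `δ / (2 * K * card ι)`. -/
lemma hasNet_absConvexCombinations_of_half [Fintype ι] {A : ι → Set (X → ℝ)} (hK : 0 < K)
    (hδ : 0 < δ) (hbdd : ∀ i, ∀ g ∈ A i, ∀ x ∈ S, |g x| ≤ K)
    (hA : ∀ i, HasNet S (A i) (δ / 2) L) :
    HasNet S (absConvexCombinations A) δ (Fintype.card ι * (1 + log (1 + 4 * K / δ) + L)) := by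
  rcases isEmpty_or_nonempty ι with hι | hι
  · refine ((hasNet_zero S).of_approx (η := δ) ?_).mono (add_zero δ).le ?_
    · rintro _ ⟨c, g, -, -, rfl⟩
      refine ⟨0, Set.zero_mem_zero, fun x _ => ?_⟩
      simpa only [Finset.univ_eq_empty, Finset.sum_empty, Pi.zero_apply, sub_zero, abs_zero]
        using hδ.le
    · rw [Fintype.card_eq_zero, Nat.cast_zero, zero_mul]
  set n := (Fintype.card ι : ℝ) with hn
  have hn0 : 0 < n := Nat.cast_pos.2 Fintype.card_pos
  refine (hasNet_absConvexCombinations hbdd (half_pos hδ).le hA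
    (ε := δ / (2 * K * n)) (t := δ / (2 * K)) (by positivity) (by positivity)).mono ?_ ?_
  · rw [← hn]
    field_simp
    norm_num
  · have mesh : δ / (2 * K) * (1 / (δ / (2 * K * n))) = n := by field_simp
    have partition_le : logPartition (δ / (2 * K)) ≤ log (1 + 4 * K / δ) :=
      (logPartition_le_log (by positivity)).trans_eq <| by rw [div_div_eq_mul_div]; ring_nf
    rw [mesh, ← hn, mul_add, mul_add, mul_one]
    gcongr

lemma log_one_add_div_le (hm : 0 < m) (hK : 0 ≤ K) (hδ : 0 < δ) (hδ1 : δ ≤ 1) :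
    log (1 + K / δ) ≤ (1 + K) ^ (2 / m : ℝ) / (2 / m) * δ ^ (-(2 : ℝ) / m) :=
  calc log (1 + K / δ) ≤ log ((1 + K) / δ) := by
        gcongr
        rw [add_div]
        gcongr
        exact (one_le_div hδ).2 hδ1
    _ ≤ ((1 + K) / δ) ^ (2 / m : ℝ) / (2 / m) := log_le_rpow_div (by positivity) (by positivity)
    _ = (1 + K) ^ (2 / m : ℝ) / (2 / m) * δ ^ (-(2 : ℝ) / m) := by
        rw [div_rpow (by positivity) hδ.le, neg_div, rpow_neg hδ.le]
        ring

lemma pd_comp_fst (a c : ℕ) (h : ℝ → ℝ) (u v : ℝ) :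
    pd a c (fun s _ => h s) u v = if c = 0 then iteratedDeriv a h u else 0 := by
  simp only [pd, iteratedDeriv_const]
  split_ifs with hc
  · rfl
  · rw [iteratedDeriv_const, ite_self]

lemma Omega2M_comp_fst (m : ℕ) (h : ℝ → ℝ) : Omega2M m (fun u _ => h u) = Omega1M m h := by
  rw [Omega2M, Finset.sum_eq_single_of_mem m (Finset.self_mem_range_succ m)]
  · simp only [pd_comp_fst, Nat.sub_self, if_true]
    rw [Omega1M, intervalIntegral.integral_of_le zero_le_one, ← integral_Icc_eq_integral_Ioc,
      Measure.volume_eq_prod]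
    have fubini := setIntegral_prod_mul (μ := volume) (ν := volume)
      (fun u => iteratedDeriv m h u ^ 2) (fun _ : ℝ => (1 : ℝ)) I I
    simpa only [mul_one, setIntegral_const, Real.volume_real_Icc_of_le zero_le_one,
      sub_zero, one_smul] using fubini
  · intro a ha hne
    have hlt : m - a ≠ 0 := by rw [Finset.mem_range] at ha; omega
    simp only [pd_comp_fst, if_neg hlt, ne_eq, OfNat.ofNat_ne_zero, not_false_eq_true, zero_pow,
      integral_zero]

lemma comp_fst_mem_smoothBall {h : ℝ → ℝ} (hh : ContDiff ℝ m h) (hΩ : √(Omega1M m h) ≤ 1)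
    (hb : ∀ u ∈ I, |h u| ≤ b) : h ∘ Prod.fst ∈ smoothBall m b :=
  ⟨hh.comp contDiff_fst, (Omega2M_comp_fst m h).trans_le (sqrt_le_one.1 hΩ),
    fun q hq => hb q.1 hq.1⟩

/-- The components of the class `SJ` which depend on the coordinates `q.1` and `q.2` only. -/
def pairComponents (m : ℕ) (b : ℝ) (q : Fin p × Fin p) : Set ((Fin p → ℝ) → ℝ) :=
  {f | ∃ g ∈ smoothBall m b, f = g ∘ fun x => (x q.1, x q.2)}

lemma SJ_subset_absConvexCombinations :
    SJ m b p J ⊆ absConvexCombinations fun q : J => pairComponents m b q := by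
  rintro _ ⟨lam, gd, go, hlam, hgd, hgo, rfl⟩
  refine ⟨fun q => lam q, fun q x => if q.1.1 = q.1.2 then gd q.1.1 (x q.1.1) else
    go q.1.1 q.1.2 (x q.1.1) (x q.1.2), ?_, fun q => ?_, ?_⟩
  · rwa [Finset.sum_coe_sort J fun q => |lam q|]
  · by_cases hq : q.1.1 = q.1.2
    · obtain ⟨hsmooth, hΩ, hb⟩ := hgd q.1.1
      simp only [if_pos hq]
      exact ⟨_, comp_fst_mem_smoothBall hsmooth hΩ hb, rfl⟩
    · obtain ⟨hsmooth, hΩ, hb⟩ := hgo q.1.1 q.1.2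
      simp only [if_neg hq]
      exact ⟨uncurry (go q.1.1 q.1.2), ⟨hsmooth, sqrt_le_one.1 hΩ, fun z hz => hb _ hz.1 _ hz.2⟩,
        rfl⟩
  · funext x
    exact (Finset.sum_coe_sort J fun q => lam q *
      if q.1 = q.2 then gd q.1 (x q.1) else go q.1 q.2 (x q.1) (x q.2)).symm

lemma hasNet_SJ (hm : 2 ≤ m) (hb : 0 < b) : ∃ C : ℝ, 0 < C ∧ ∀ (p : ℕ)
    (J : Finset (Fin p × Fin p)) (δ : ℝ), 0 < δ → δ < 1 →
      HasNet {x | ∀ j, x j ∈ I} (SJ m b p J) δ (C * J.card * δ ^ (-(2 : ℝ) / m)) := by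
  obtain ⟨C, hC, hnet⟩ := exists_hasNet_smoothBall hm b
  refine ⟨1 + (1 + 4 * b) ^ (2 / m : ℝ) / (2 / m) + C * (1 / 2) ^ (-(2 : ℝ) / m), by positivity,
    fun p J δ hδ hδ1 => ?_⟩
  have mapsTo_pair (q : Fin p × Fin p) :
      Set.MapsTo (fun x : Fin p → ℝ => (x q.1, x q.2)) {x | ∀ j, x j ∈ I} (I ×ˢ I) :=
    fun x hx => ⟨hx q.1, hx q.2⟩
  have component_net (q : J) := (hnet (δ / 2) (by positivity) (by linarith)).comp (mapsTo_pair q)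
  have component_le (q : J) : ∀ g ∈ pairComponents m b q.1, ∀ x ∈ {x | ∀ j, x j ∈ I},
      |g x| ≤ b := by
    rintro _ ⟨g, hg, rfl⟩ x hx
    exact hg.2.2 _ (mapsTo_pair q hx)
  refine ((hasNet_absConvexCombinations_of_half hb hδ component_le component_net).of_approx
    (η := 0) fun f hf => ⟨f, SJ_subset_absConvexCombinations hf, fun x _ => ?_⟩).mono
    (zero_add δ).le ?_
  · rw [sub_self, abs_zero]
  have one_le : 1 ≤ δ ^ (-(2 : ℝ) / m) :=
    one_le_rpow_of_pos_of_le_one_of_nonpos hδ hδ1.le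
      (div_nonpos_of_nonpos_of_nonneg (by norm_num) m.cast_nonneg)
  have half_rpow : (δ / 2) ^ (-(2 : ℝ) / m) = (1 / 2) ^ (-(2 : ℝ) / m) * δ ^ (-(2 : ℝ) / m) := by
    rw [← mul_rpow (by norm_num) hδ.le, one_div_mul_eq_div]
  rw [Fintype.card_coe, mul_comm _ (J.card : ℝ), mul_assoc, add_mul, add_mul, one_mul, half_rpow,
    ← mul_assoc C]
  gcongr
  exact log_one_add_div_le (by omega) (by positivity) hδ hδ1.le

lemma HasNet.entE_le {A : Set ((Fin p → ℝ) → ℝ)} (h : HasNet {x | ∀ j, x j ∈ I} A δ L)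
    (hL : 0 ≤ L) : entE (dBox p) A δ ≤ ENNReal.ofReal L := by
  obtain ⟨T, hcard, hT⟩ := h
  have covers : ∀ f ∈ A, ∃ t ∈ T, dBox p f t ≤ ENNReal.ofReal δ := fun f hf => by
    obtain ⟨t, ht, hft⟩ := hT f hf
    exact ⟨t, ht, iSup₂_le fun x hx => ENNReal.ofReal_le_ofReal (hft x hx)⟩
  refine (iInf_le _ ⟨T, covers⟩).trans (ENNReal.ofReal_le_ofReal ?_)
  rcases T.card.eq_zero_or_pos with hT0 | hT0
  · rwa [hT0, Nat.cast_zero, log_zero]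
  · rwa [log_le_iff_le_exp (by exact_mod_cast hT0)]

theorem statement12_general (m : ℕ) (hm : 2 ≤ m) (b : ℝ) (hb : 0 < b) : ∃ C : ℝ, 0 < C ∧ ∀ (p : ℕ)
    (J : Finset (Fin p × Fin p)) (δ : ℝ), 0 < δ → δ < 1 →
      entE (dBox p) (SJ m b p J) δ ≤ ENNReal.ofReal (C * J.card * δ ^ (-(2 : ℝ) / m)) := by
  obtain ⟨C, hC, hnet⟩ := hasNet_SJ hm hb
  exact ⟨C, hC, fun p J δ hδ hδ1 => (hnet p J δ hδ hδ1).entE_le (by positivity)⟩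

end SparseCombinations

end Census

open Census in
/-- sup-norm entropy of sparse absolutely convex combinations of
smooth bivariate components.  There is `C` depending only on `m` and `b` such that
`H(δ, S_J, ‖·‖_∞) ≤ C |J| δ^{-2/m}` for all `δ ∈ (0,1)`. -/
theorem statement12 (m : ℕ) (hm : 2 ≤ m) (b : ℝ) (hb : 1 ≤ b) :
    ∃ C : ℝ, 0 < C ∧
      ∀ (p : ℕ), 1 ≤ p →
      ∀ (J : Finset (Fin p × Fin p)), (∀ q ∈ J, q.1 ≤ q.2) →
      ∀ (δ : ℝ), 0 < δ → δ < 1 →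
        entE (dBox p) (SJ m b p J) δ ≤
          ENNReal.ofReal (C * (J.card : ℝ) * δ ^ (-(2 : ℝ) / m)) := by
  obtain ⟨C, hC, h⟩ := statement12_general m hm b (zero_lt_one.trans_le hb)
  exact ⟨C, hC, fun p _ J _ => h p J⟩
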